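/- arXiv:math/0205251 — 4 statements merged into one kernel-verified Lean document; each statement's English description precedes it below -/
import Mathlib

section
/- Let x, y, z, w ∈ R be homogeneous of degree n ≥ 1 with no common factor, and assume I = ⟨x,y,z,w⟩ is a local complete intersection, i.e., for every minimal prime 𝔭 over I, the ideal generated by I in the localization R_𝔭 is generated by two elements. Then there is a nonzero polynomial G in 12 variables over ℂ such that for every matrix (a_{ij}) ∈ ℂ^{3×4} with G((a_{ij})) ≠ 0, the linear combinations x' = a_{11}x+a_{12}y+a_{13}z+a_{14}w, y' = a_{21}x+a_{22}y+a_{23}z+a_{24}w, z' = a_{31}x+a_{32}y+a_{33}z+a_{34}w satisfy sat(⟨x',y',z'⟩) = sat(⟨x,y,z,w⟩); in particular w ∈ sat(⟨x',y',z'⟩). -/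
/-!
Write `g = (x, y, z, w)`, `I = ⟨g⟩`, `𝔪 = ⟨s, t, u⟩`, and `J_a` for the ideal generated by the three
combinations with coefficient matrix `a`. The claim follows once `𝔪 ^ k * I ⊆ J_a` for some `k`.

For a fixed `k` this is an open condition on `a`: in degree `n + k` it says that the products of the
monomials of degree `k` with the three combinations span the products of these monomials with the
`gⱼ`, and such a spanning condition is implied by the nonvanishing of a determinant that is polynomial
in `a` (`exists_ne_zero_span`, `exists_generic`). Hence a single good matrix suffices.

A good matrix is found by choosing combinations `x', y', z'` one after the other
(`exists_good_combs`), each avoiding finitely many proper subspaces of coefficient vectors. At every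
minimal prime `P` of `I`, the ideal `I` is generated by two elements, so by Nakayama's lemma a general
choice of `x', y'` generates `I` at `P`. Moreover `x' ≠ 0`, `y'` lies in no minimal prime of `(x')`
(these are generated by prime elements, so do not contain `I`), and `z'` lies in no minimal prime of
`(x', y')` that does not contain `I`. Now let `p` be a homogeneous prime containing `(J : I)`. If
`p ⊇ I`, then `p` strictly contains a minimal prime of `I`, as `J` and `I` agree at those; otherwise
`p` strictly contains a minimal prime of `(x', y')`, as `z' ∈ p`. Either way `p` strictly contains a
prime containing `x'` and `y'`, which has height at least two. So `p` has height three, hence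
`p = 𝔪`. Therefore `𝔪` is contained in the radical of `(J : I)`, and a power of it in `(J : I)`.
-/

open MvPolynomial

/-- `R3` is the polynomial ring `ℂ[s,t,u]`. -/
abbrev R3 : Type := MvPolynomial (Fin 3) ℂ

/-- The saturation of `J` with respect to the irrelevant ideal `⟨s,t,u⟩`:
`{f | ⟨s,t,u⟩^k · f ⊆ J for some k}`. -/
def satSet (J : Ideal R3) : Set R3 :=
  {f | ∃ k : ℕ, ∀ g ∈ (Ideal.span {X 0, X 1, X 2} : Ideal R3) ^ k, g * f ∈ J}

/-- `I` is a local complete intersection: at each minimal prime `𝔭` over `I`, the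
ideal generated by `I` in the localization `R_𝔭` is generated by two elements. -/
def IsLCI (I : Ideal R3) : Prop :=
  ∀ 𝔭 ∈ I.minimalPrimes, ∀ h𝔭 : 𝔭.IsPrime,
    letI := h𝔭
    ∃ a b : Localization.AtPrime 𝔭,
      Ideal.map (algebraMap R3 (Localization.AtPrime 𝔭)) I = Ideal.span {a, b}

/-! ### Linear combinations and avoidance -/

/-- The linear combination `∑ⱼ aⱼ gⱼ` of four fixed polynomials, as a `ℂ`-linear map in the
coefficient vector `a`. -/
noncomputable def comb (g : Fin 4 → R3) : (Fin 4 → ℂ) →ₗ[ℂ] R3 :=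
  Fintype.linearCombination ℂ g

lemma comb_apply (g : Fin 4 → R3) (a : Fin 4 → ℂ) :
    comb g a = ∑ j, C (a j) * g j := by
  simp [comb, Fintype.linearCombination_apply, smul_eq_C_mul]

lemma comb_mem (g : Fin 4 → R3) (a : Fin 4 → ℂ) : comb g a ∈ Ideal.span (Set.range g) := by
  rw [comb_apply]
  exact Ideal.sum_mem _ fun j _ => Ideal.mul_mem_left _ _ (Ideal.subset_span ⟨j, rfl⟩)

/-- Since `ℂ` is infinite, some linear combination of the `gⱼ` avoids finitely many given ideals,
none of which contains all the `gⱼ`. -/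
lemma exists_comb_avoid (g : Fin 4 → R3) (S : Set (Ideal R3)) (hS : S.Finite)
    (h : ∀ T ∈ S, ¬ Ideal.span (Set.range g) ≤ T) : ∃ a, ∀ T ∈ S, comb g a ∉ T := by
  classical
  by_contra! hc
  let W : Ideal R3 → Submodule ℂ (Fin 4 → ℂ) := fun T => (T.restrictScalars ℂ).comap (comb g)
  have htop : ⊤ ∈ hS.toFinset.image W := by
    apply Subspace.top_mem_of_biUnion_eq_univ
    rw [Set.eq_univ_iff_forall]
    intro a
    obtain ⟨T, hT, haT⟩ := hc a
    simp only [Set.mem_iUnion]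
    exact ⟨W T, Finset.mem_image_of_mem _ (hS.mem_toFinset.2 hT), haT⟩
  obtain ⟨T, hT, hW⟩ := Finset.mem_image.1 htop
  refine h T (hS.mem_toFinset.1 hT) (Ideal.span_le.2 ?_)
  rintro _ ⟨j, rfl⟩
  have : Pi.single j 1 ∈ W T := hW ▸ Submodule.mem_top
  simpa [W, comb, Fintype.linearCombination_apply_single] using this

/-! ### Generators at a prime -/

/-- An inclusion of finitely generated ideals in the local ring at `P` holds after clearing a
single denominator `s ∉ P`. -/
lemma exists_notMem_smul_le {P I K : Ideal R3} [P.IsPrime]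
    (h : I.map (algebraMap R3 (Localization.AtPrime P)) ≤
      K.map (algebraMap R3 (Localization.AtPrime P))) :
    ∃ s ∉ P, ∀ f ∈ I, s * f ∈ K := by
  classical
  obtain ⟨S, rfl⟩ := (isNoetherianRing_iff_ideal_fg R3).1 inferInstance I
  have key : ∀ f ∈ S, ∃ s ∈ P.primeCompl, s * f ∈ K := fun f hf =>
    (IsLocalization.algebraMap_mem_map_algebraMap_iff P.primeCompl
      (Localization.AtPrime P) K f).1 (h (Ideal.mem_map_of_mem _ (Ideal.subset_span hf)))
  choose! s hs hsK using key
  refine ⟨∏ f ∈ S, s f, prod_mem (S := P.primeCompl) hs, fun f hf => ?_⟩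
  have : Ideal.span (S : Set R3) ≤ K.colon {∏ f ∈ S, s f} := by
    rw [Ideal.span_le]
    intro f hf
    rw [SetLike.mem_coe, Submodule.mem_colon_singleton, smul_eq_mul,
      ← Finset.mul_prod_erase S s hf, mul_comm, mul_right_comm]
    exact Ideal.mul_mem_right _ _ (hsK f hf)
  have h2 := this hf
  rwa [Submodule.mem_colon_singleton, smul_eq_mul, mul_comm] at h2

/-- In a local ring, let `𝔞 = (a, b)`. If the image of `x` in `𝔞 / 𝔪𝔞` is nonzero and that of `y`
is not a multiple of it, then `x, y` generate `𝔞`; this is an exchange argument, in which a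
coefficient outside `𝔪` is a unit. -/
lemma le_span_pair_of_notMem {L : Type*} [CommRing L] [IsLocalRing L] {a b x y : L}
    (hxI : x ∈ Ideal.span {a, b}) (hyI : y ∈ Ideal.span {a, b})
    (hx : x ∉ IsLocalRing.maximalIdeal L * Ideal.span {a, b})
    (hy : y ∉ Ideal.span {x} ⊔ IsLocalRing.maximalIdeal L * Ideal.span {a, b}) :
    Ideal.span {a, b} ≤ Ideal.span {x, y} := by
  have aux : ∀ a b : L, ∀ α β : L, IsUnit α → α * a + β * b = x →
      y ∈ Ideal.span {a, b} →
      y ∉ Ideal.span {x} ⊔ IsLocalRing.maximalIdeal L * Ideal.span {a, b} →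
      Ideal.span {a, b} ≤ Ideal.span {x, y} := by
    intro a b α β hα hxe hyI hy
    obtain ⟨α', hα'⟩ := hα.exists_left_inv
    have ha : a = α' * x - α' * β * b := by
      rw [← hxe]; linear_combination (-a) * hα'
    obtain ⟨c, d, hye⟩ := Ideal.mem_span_pair.1 hyI
    have hye' : y = c * α' * x + (d - c * α' * β) * b := by
      rw [← hye, ha]; ring
    have hδ : IsUnit (d - c * α' * β) := by
      by_contra hδ
      apply hy
      rw [hye']
      refine add_mem (Ideal.mem_sup_left (Ideal.mul_mem_left _ _ (Ideal.subset_span rfl)))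
        (Ideal.mem_sup_right (Ideal.mul_mem_mul ?_ (Ideal.subset_span (by simp))))
      exact (IsLocalRing.mem_maximalIdeal _).2 hδ
    obtain ⟨δ', hδ'⟩ := hδ.exists_left_inv
    have hb : b ∈ Ideal.span {x, y} := by
      rw [Ideal.mem_span_pair]
      refine ⟨-δ' * (c * α'), δ', ?_⟩
      linear_combination δ' * hye' + b * hδ'
    have ha' : a ∈ Ideal.span {x, y} := by
      rw [ha]
      exact sub_mem (Ideal.mul_mem_left _ _ (Ideal.subset_span (by simp)))
        (Ideal.mul_mem_left _ _ hb)
    rw [Ideal.span_le]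
    rintro _ (rfl | rfl)
    · exact ha'
    · exact hb
  obtain ⟨α, β, hxe⟩ := Ideal.mem_span_pair.1 hxI
  by_cases hα : IsUnit α
  · exact aux a b α β hα hxe hyI hy
  by_cases hβ : IsUnit β
  · rw [Set.pair_comm a b] at hyI hy ⊢
    exact aux b a β α hβ (by rw [← hxe, add_comm]) hyI hy
  refine absurd ?_ hx
  rw [← hxe]
  exact add_mem
    (Ideal.mul_mem_mul ((IsLocalRing.mem_maximalIdeal _).2 hα) (Ideal.subset_span (by simp)))
    (Ideal.mul_mem_mul ((IsLocalRing.mem_maximalIdeal _).2 hβ) (Ideal.subset_span (by simp)))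

/-- If `I` is generated by two elements at `P`, then so it is by `x, y ∈ I`, as soon as `x` avoids
an ideal `T₁` and `y` avoids an ideal `T₂` depending on `x`, neither of which contains `I`. Here `T₁`
is the preimage of `𝔪 I_P`, and `T₂` that of `(x) + 𝔪 I_P`, unless the latter is all of `I_P`; then `x`
alone generates `I_P` by Nakayama, and `T₂ = 0` will do. -/
lemma exists_local_avoid {P I : Ideal R3} [P.IsPrime] (hI : I ≠ ⊥)
    (h2 : ∃ a b : Localization.AtPrime P,
      I.map (algebraMap R3 (Localization.AtPrime P)) = Ideal.span {a, b}) :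
    ∃ T₁ : Ideal R3, ¬ I ≤ T₁ ∧ ∀ x ∈ I, x ∉ T₁ →
      ∃ T₂ : Ideal R3, ¬ I ≤ T₂ ∧ ∀ y ∈ I, y ∉ T₂ →
        ∃ s ∉ P, ∀ f ∈ I, s * f ∈ Ideal.span {x, y} := by
  obtain ⟨a, b, hab⟩ := h2
  set φ := algebraMap R3 (Localization.AtPrime P)
  set m := IsLocalRing.maximalIdeal (Localization.AtPrime P)
  have hφ : Function.Injective φ :=
    IsLocalization.injective _ P.primeCompl_le_nonZeroDivisors
  have hfg : (I.map φ).FG := IsNoetherian.noetherian _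
  have hm : m ≤ Ideal.jacobson ⊥ := IsLocalRing.maximalIdeal_le_jacobson _
  refine ⟨(m * I.map φ).comap φ, fun hle => hI ?_, fun x hx hxT => ?_⟩
  · have h := Submodule.le_of_le_smul_of_le_jacobson_bot (N := ⊥) hfg hm
      (by simpa using Ideal.map_le_iff_le_comap.2 hle)
    exact (Ideal.map_eq_bot_iff_of_injective hφ).1 (le_bot_iff.1 h)
  by_cases hc : I.map φ ≤ Ideal.span {φ x} ⊔ m * I.map φ
  · refine ⟨⊥, by simpa using hI, fun y hy _ => exists_notMem_smul_le ?_⟩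
    refine (Submodule.le_of_le_smul_of_le_jacobson_bot hfg hm hc).trans ?_
    rw [Ideal.span_le, Set.singleton_subset_iff]
    exact Ideal.mem_map_of_mem _ (Ideal.subset_span (by simp))
  · refine ⟨(Ideal.span {φ x} ⊔ m * I.map φ).comap φ,
      fun hle => hc (Ideal.map_le_iff_le_comap.2 hle),
      fun y hy hyT => exists_notMem_smul_le ?_⟩
    rw [Ideal.map_span, Set.image_pair, hab]
    have hx' := Ideal.mem_map_of_mem φ hx
    have hy' := Ideal.mem_map_of_mem φ hy
    rw [Ideal.mem_comap] at hxT hyT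
    rw [hab] at hx' hy' hxT hyT
    exact le_span_pair_of_notMem hx' hy' hxT hyT

/-- A minimal prime over a nonzero principal ideal of the factorial ring `R3` is generated by a
prime element, so it cannot contain polynomials without common factor. -/
lemma not_le_of_mem_minimalPrimes {g : Fin 4 → R3}
    (hcf : ∀ p : R3, (∀ j, p ∣ g j) → IsUnit p) {x : R3} (hx : x ≠ 0) {Q : Ideal R3}
    (hQ : Q ∈ (Ideal.span {x}).minimalPrimes) : ¬ Ideal.span (Set.range g) ≤ Q := by
  intro hle
  have hQp : Q.IsPrime := hQ.1.1
  have hxQ : x ∈ Q := hQ.1.2 (Ideal.subset_span rfl)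
  obtain ⟨q, hq, hqx, hqQ⟩ : ∃ q, Prime q ∧ q ∣ x ∧ q ∈ Q := by
    obtain ⟨f, hf, hfx⟩ := UniqueFactorizationMonoid.exists_prime_factors x hx
    have : f.prod ∈ Q := by
      obtain ⟨u, hu⟩ := hfx
      rw [← hu] at hxQ
      exact (hQp.mem_or_mem hxQ).resolve_right
        fun h => hQp.ne_top (Ideal.eq_top_of_isUnit_mem _ h u.isUnit)
    obtain ⟨q, hqf, hqQ⟩ := (hQp.multiset_prod_mem_iff_exists_mem f).1 this
    exact ⟨q, hf q hqf, (Multiset.dvd_prod hqf).trans hfx.dvd, hqQ⟩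
  have hqp : (Ideal.span {q}).IsPrime := (Ideal.span_singleton_prime hq.ne_zero).2 hq
  have hQq : Q ≤ Ideal.span {q} :=
    hQ.2 ⟨hqp, (Ideal.span_singleton_le_span_singleton).2 hqx⟩
      (by rwa [Ideal.span_singleton_le_iff_mem])
  exact hq.not_isUnit (hcf q fun j =>
    Ideal.mem_span_singleton.1 (hQq (hle (Ideal.subset_span ⟨j, rfl⟩))))

/-! ### Existence of good coefficients -/

section Graded

attribute [local instance] MvPolynomial.gradedAlgebra

lemma coe_decompose_eq (f : R3) (i : ℕ) :
    (DirectSum.decompose (homogeneousSubmodule (Fin 3) ℂ) f i : R3) = homogeneousComponent i f :=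
  decomposition.decompose'_apply f i

lemma homogeneousComponent_mul_of_isHomogeneous {f h : R3} {n : ℕ} (hh : h.IsHomogeneous n)
    (k : ℕ) : homogeneousComponent (k + n) (f * h) = homogeneousComponent k f * h := by
  have := DirectSum.coe_decompose_mul_of_right_mem_of_le (homogeneousSubmodule (Fin 3) ℂ)
    (a := f) (n := k + n) ((mem_homogeneousSubmodule n h).2 hh) (Nat.le_add_left n k)
  rwa [Nat.add_sub_cancel, coe_decompose_eq, coe_decompose_eq] at this

/-- A homogeneous prime of height at least `3 = dim R3` is maximal, and being contained in the irrelevant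
ideal it is equal to it. -/
lemma idealOfVars_le_of_height {p : Ideal R3} [hp : p.IsPrime]
    (hh : p.IsHomogeneous (homogeneousSubmodule (Fin 3) ℂ)) (h3 : 3 ≤ p.height) :
    idealOfVars (Fin 3) ℂ ≤ p := by
  have hdim : ringKrullDim R3 = 3 := by
    rw [MvPolynomial.ringKrullDim_of_isNoetherianRing, ringKrullDim_eq_zero_of_field]
    simp
  have hle : p ≤ idealOfVars (Fin 3) ℂ := by
    intro f hf
    rw [← pow_one (idealOfVars _ _), mem_pow_idealOfVars_iff']
    intro d hd
    have hd0 : d = 0 := (Finsupp.degree_eq_zero_iff d).1 (Nat.lt_one_iff.1 hd)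
    have h0 := homogeneousComponent_mem_of_mem hh hf 0
    rw [homogeneousComponent_zero] at h0
    rw [hd0]
    by_contra hne
    exact hp.ne_top (Ideal.eq_top_of_isUnit_mem _ h0 ((isUnit_iff_ne_zero.2 hne).map C))
  have hne : idealOfVars (Fin 3) ℂ ≠ ⊤ := by
    intro h
    have : (C 1 : R3) ∈ idealOfVars (Fin 3) ℂ ^ 1 := by rw [pow_one, h]; trivial
    rw [C_mem_pow_idealOfVars_iff] at this
    simp at this
  have hfin : FiniteRingKrullDim R3 := by
    rw [finiteRingKrullDim_iff_ne_bot_and_top, hdim]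
    exact ⟨by decide, by decide⟩
  have hht : p.height = ringKrullDim R3 := by
    apply le_antisymm Ideal.height_le_ringKrullDim_of_isPrime
    rw [hdim]
    exact WithBot.coe_le_coe.2 h3
  have hmax := Ideal.isMaximal_of_height_eq_ringKrullDim hht
  exact (hmax.eq_of_le hne hle).ge

lemma three_le_height {p₁ p₂ p₃ : Ideal R3} [p₁.IsPrime] [p₂.IsPrime] [p₃.IsPrime]
    (h₀ : p₁ ≠ ⊥) (h₁ : p₁ < p₂) (h₂ : p₂ < p₃) : 3 ≤ p₃.height := by
  have e1 := Ideal.height_add_one_le_of_lt_of_isPrime (bot_lt_iff_ne_bot.2 h₀)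
  have e2 := Ideal.height_add_one_le_of_lt_of_isPrime h₁
  have e3 := Ideal.height_add_one_le_of_lt_of_isPrime h₂
  calc (3 : ℕ∞) = 0 + 1 + 1 + 1 := by norm_num
    _ ≤ (⊥ : Ideal R3).height + 1 + 1 + 1 := by gcongr; exact zero_le
    _ ≤ p₁.height + 1 + 1 := by gcongr
    _ ≤ p₂.height + 1 := by gcongr
    _ ≤ _ := e3

lemma colon_isHomogeneous {J : Ideal R3} {g : Fin 4 → R3} {n : ℕ}
    (hg : ∀ j, (g j).IsHomogeneous n) (hJ : J.IsHomogeneous (homogeneousSubmodule (Fin 3) ℂ)) :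
    (J.colon (Set.range g)).IsHomogeneous (homogeneousSubmodule (Fin 3) ℂ) := by
  intro i f hf
  rw [Submodule.mem_colon] at hf ⊢
  rintro _ ⟨j, rfl⟩
  have h1 := homogeneousComponent_mem_of_mem hJ (hf _ ⟨j, rfl⟩) (i + n)
  rw [smul_eq_mul, homogeneousComponent_mul_of_isHomogeneous (hg j)] at h1
  rwa [coe_decompose_eq]

lemma comb_isHomogeneous {g : Fin 4 → R3} {n : ℕ} (hg : ∀ j, (g j).IsHomogeneous n)
    (a : Fin 4 → ℂ) : (comb g a).IsHomogeneous n := by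
  rw [comb_apply]
  exact IsHomogeneous.sum _ _ _ fun j _ => (hg j).C_mul _

/-- One good choice of coefficients: there are three linear combinations of the `gⱼ` generating an
ideal `J` such that some power of the irrelevant ideal multiplies `I` into `J`. -/
lemma exists_good_combs {n : ℕ} {g : Fin 4 → R3} (hg : ∀ j, (g j).IsHomogeneous n)
    (hcf : ∀ p : R3, (∀ j, p ∣ g j) → IsUnit p) (hlci : IsLCI (Ideal.span (Set.range g))) :
    ∃ a : Fin 3 → Fin 4 → ℂ, ∃ k : ℕ, ∀ f ∈ idealOfVars (Fin 3) ℂ ^ k, ∀ j,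
      f * g j ∈ Ideal.span (Set.range fun i => comb g (a i)) := by
  set I := Ideal.span (Set.range g) with hIdef
  have hI : I ≠ ⊥ := by
    intro h0
    have h1 := hcf 0 fun j => by
      have : g j ∈ I := Ideal.subset_span ⟨j, rfl⟩
      rw [h0, Ideal.mem_bot] at this
      rw [this]
    exact not_isUnit_zero h1
  have hfinI := I.finite_minimalPrimes_of_isNoetherianRing R3
  have hloc : ∀ P ∈ I.minimalPrimes, ∃ T₁ : Ideal R3, ¬ I ≤ T₁ ∧ ∀ x ∈ I, x ∉ T₁ →
      ∃ T₂ : Ideal R3, ¬ I ≤ T₂ ∧ ∀ y ∈ I, y ∉ T₂ →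
        ∃ s ∉ P, ∀ f ∈ I, s * f ∈ Ideal.span {x, y} := by
    intro P hP
    have := hP.1.1
    exact exists_local_avoid hI (hlci P hP this)
  choose! T₁ hT₁ hloc using hloc
  -- `x` is nonzero and can be part of a pair of generators at every minimal prime of `I`.
  obtain ⟨a₀, ha₀⟩ := exists_comb_avoid g (insert ⊥ (T₁ '' I.minimalPrimes))
    ((hfinI.image _).insert _) (by
      rintro T (rfl | ⟨P, hP, rfl⟩)
      · rwa [le_bot_iff]
      · exact hT₁ P hP)
  set x := comb g a₀
  have hx0 : x ≠ 0 := fun h => ha₀ ⊥ (Set.mem_insert _ _) h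
  have hxI : x ∈ I := comb_mem g a₀
  have hloc' : ∀ P ∈ I.minimalPrimes, ∃ T₂ : Ideal R3, ¬ I ≤ T₂ ∧ ∀ y ∈ I, y ∉ T₂ →
      ∃ s ∉ P, ∀ f ∈ I, s * f ∈ Ideal.span {x, y} := fun P hP =>
    hloc P hP x hxI (ha₀ _ (Set.mem_insert_of_mem _ ⟨P, hP, rfl⟩))
  choose! T₂ hT₂ hloc' using hloc'
  -- `y` completes `x` to generators at every minimal prime of `I`, and avoids the minimal primes
  -- of `x`, so that every prime containing `x` and `y` has height at least two.
  obtain ⟨a₁, ha₁⟩ := exists_comb_avoid g ((Ideal.span {x}).minimalPrimes ∪ T₂ '' I.minimalPrimes)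
    (((Ideal.span {x}).finite_minimalPrimes_of_isNoetherianRing R3).union (hfinI.image _)) (by
      rintro T (hT | ⟨P, hP, rfl⟩)
      · exact not_le_of_mem_minimalPrimes hcf hx0 hT
      · exact hT₂ P hP)
  set y := comb g a₁
  have hyI : y ∈ I := comb_mem g a₁
  have hlocal : ∀ P ∈ I.minimalPrimes, ∃ s ∉ P, ∀ f ∈ I, s * f ∈ Ideal.span {x, y} :=
    fun P hP => hloc' P hP y hyI (ha₁ _ (Or.inr ⟨P, hP, rfl⟩))
  -- `z` avoids the minimal primes of `(x, y)` outside the zero locus of `I`.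
  obtain ⟨a₂, ha₂⟩ := exists_comb_avoid g {Q | Q ∈ (Ideal.span {x, y}).minimalPrimes ∧ ¬ I ≤ Q}
    (((Ideal.span {x, y}).finite_minimalPrimes_of_isNoetherianRing R3).subset fun Q hQ => hQ.1)
    (fun T hT => hT.2)
  set z := comb g a₂
  let a : Fin 3 → Fin 4 → ℂ := ![a₀, a₁, a₂]
  set J := Ideal.span (Set.range fun i => comb g (a i)) with hJdef
  have hxJ : x ∈ J := Ideal.subset_span ⟨0, rfl⟩
  have hyJ : y ∈ J := Ideal.subset_span ⟨1, rfl⟩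
  have hzJ : z ∈ J := Ideal.subset_span ⟨2, rfl⟩
  have hxyJ : Ideal.span {x, y} ≤ J := by
    rw [Ideal.span_le]
    rintro _ (rfl | rfl)
    · exact hxJ
    · exact hyJ
  have hJh : J.IsHomogeneous (homogeneousSubmodule (Fin 3) ℂ) := by
    apply Ideal.homogeneous_span
    rintro _ ⟨i, rfl⟩
    exact ⟨n, comb_isHomogeneous hg (a i)⟩
  have hCh := colon_isHomogeneous hg hJh
  have hJC : J ≤ J.colon (Set.range g) := fun f hf =>
    Submodule.mem_colon.2 fun r _ => Ideal.mul_mem_right _ _ hf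
  have hrad : idealOfVars (Fin 3) ℂ ≤ (J.colon (Set.range g)).radical := by
    -- It suffices to treat homogeneous primes `p ⊇ (J : I)`; each turns out to have height `3`.
    rw [hCh.radical_eq]
    refine le_sInf ?_
    rintro p ⟨hph, hCp, hp⟩
    have hJp : J ≤ p := hJC.trans hCp
    have key : ∀ q : Ideal R3, q.IsPrime → x ∈ q → y ∈ q → ∀ p : Ideal R3, p.IsPrime → q < p →
        3 ≤ p.height := by
      intro q hq hxq hyq p hp hqp
      obtain ⟨q₁, hq₁, hq₁q⟩ := Ideal.exists_minimalPrimes_le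
        ((Ideal.span_singleton_le_iff_mem q).2 hxq)
      have := hq₁.1.1
      refine three_le_height (p₁ := q₁) (p₂ := q) ?_ (lt_of_le_of_ne hq₁q ?_) hqp
      · rintro rfl
        exact hx0 ((Ideal.span_singleton_le_iff_mem _).1 hq₁.1.2)
      · rintro rfl
        exact ha₁ _ (Or.inl hq₁) hyq
    apply idealOfVars_le_of_height hph
    by_cases hIp : I ≤ p
    · obtain ⟨P, hP, hPp⟩ := Ideal.exists_minimalPrimes_le hIp
      refine key P hP.1.1 (hP.1.2 hxI) (hP.1.2 hyI) p hp (lt_of_le_of_ne hPp ?_)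
      rintro rfl
      obtain ⟨s, hs, hsI⟩ := hlocal P hP
      refine hs (hCp (Submodule.mem_colon.2 ?_))
      rintro _ ⟨j, rfl⟩
      exact hxyJ (hsI _ (Ideal.subset_span ⟨j, rfl⟩))
    · obtain ⟨Q, hQ, hQp⟩ := Ideal.exists_minimalPrimes_le (hxyJ.trans hJp)
      refine key Q hQ.1.1 (hQ.1.2 (Ideal.subset_span (by simp)))
        (hQ.1.2 (Ideal.subset_span (by simp))) p hp (lt_of_le_of_ne hQp ?_)
      rintro rfl
      exact ha₂ _ ⟨hQ, hIp⟩ (hJp hzJ)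
  obtain ⟨k, hk⟩ := Ideal.exists_pow_le_of_le_radical_of_fg hrad (idealOfVars_fg (Fin 3) ℂ)
  exact ⟨a, k, fun f hf j => Submodule.mem_colon.1 (hk hf) _ ⟨j, rfl⟩⟩

end Graded

/-! ### Openness in the coefficients -/

/-- Openness of the spanning condition: let the vectors `u_q(a)` be combinations of a finite
family `v` with coefficients polynomial in the parameter `a`. If the `u_q(a₀)` span all `v_s` for one
`a₀`, then the `u_q(a)` do so wherever a suitable nonzero polynomial does not vanish. -/
lemma exists_ne_zero_span {ι S Q V : Type*} [Fintype S] [Fintype Q]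
    [AddCommGroup V] [Module ℂ V] (v : S → V) (A : Q → S → MvPolynomial ι ℂ) (a₀ : ι → ℂ)
    (h : ∀ s, v s ∈ Submodule.span ℂ (Set.range fun q => ∑ t, eval a₀ (A q t) • v t)) :
    ∃ G : MvPolynomial ι ℂ, G ≠ 0 ∧ ∀ a, eval a G ≠ 0 →
      ∀ s, v s ∈ Submodule.span ℂ (Set.range fun q => ∑ t, eval a (A q t) • v t) := by
  classical
  simp only [Submodule.mem_span_range_iff_exists_fun] at h
  choose L hL using h
  -- `B(a) v = L u(a)` and `B(a₀) v = v`. As `v` may be linearly dependent, `B(a₀)` need not be the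
  -- identity; the correction in `M` keeps `M(a) v = L u(a)` and makes `M(a₀) = 1`.
  let B : Matrix S S (MvPolynomial ι ℂ) := Matrix.of fun s t => ∑ q, C (L s q) * A q t
  let M : Matrix S S (MvPolynomial ι ℂ) := 1 + B - (B.map (eval a₀)).map C
  have hM : ∀ a, (eval a) M.det =
      (1 + B.map (eval a) - B.map (eval a₀)).det := by
    intro a
    rw [RingHom.map_det]
    congr 1
    ext s t
    simp [M, Matrix.one_apply, apply_ite]
  have hB : ∀ a s, ∑ t, (B.map (eval a)) s t • v t = ∑ q, L s q • ∑ t, eval a (A q t) • v t := by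
    intro a s
    simp only [B, Matrix.map_apply, Matrix.of_apply, map_sum, map_mul, eval_C, Finset.sum_smul,
      Finset.smul_sum, mul_smul]
    exact Finset.sum_comm
  refine ⟨M.det, fun h0 => ?_, fun a ha s => ?_⟩
  · have := hM a₀
    rw [h0] at this
    simp at this
  rw [hM] at ha
  set N := 1 + B.map (eval a) - B.map (eval a₀) with hN
  have hNv : ∀ s, ∑ t, N s t • v t = ∑ q, L s q • ∑ t, eval a (A q t) • v t := by
    intro s
    rw [← hB a s]
    have h1 : ∑ t, (B.map (eval a₀)) s t • v t = v s := by rw [hB, hL]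
    have h2 : ∑ t, (1 : Matrix S S ℂ) s t • v t = v s := by simp [Matrix.one_apply]
    simp only [hN, Matrix.add_apply, Matrix.sub_apply, add_smul, sub_smul,
      Finset.sum_add_distrib, Finset.sum_sub_distrib, h1, h2]
    abel
  have hv : v s = ∑ r, N⁻¹ s r • ∑ t, N r t • v t := by
    have hinv : N⁻¹ * N = 1 := Matrix.nonsing_inv_mul _ (isUnit_iff_ne_zero.2 ha)
    simp only [Finset.smul_sum, smul_smul]
    rw [Finset.sum_comm]
    simp only [← Finset.sum_smul, ← Matrix.mul_apply, hinv]
    simp [Matrix.one_apply]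
  rw [hv]
  refine Submodule.sum_mem _ fun r _ => Submodule.smul_mem _ _ ?_
  rw [hNv]
  exact Submodule.sum_mem _ fun q _ => Submodule.smul_mem _ _ (Submodule.subset_span ⟨q, rfl⟩)

/-- If `h₀, h₁, h₂` are forms of degree `n`, the part of degree `k + n` of the ideal they generate is
spanned over `ℂ` by the products of the `hᵢ` with the monomials of degree `k`. -/
lemma mem_span_monomial_mul {n k : ℕ} {D : Finset (Fin 3 →₀ ℕ)}
    (hD : ∀ d, d ∈ D ↔ d.degree = k) {h : Fin 3 → R3} (hh : ∀ i, (h i).IsHomogeneous n)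
    {f : R3} (hf : f.IsHomogeneous (k + n)) (hfJ : f ∈ Ideal.span (Set.range h)) :
    f ∈ Submodule.span ℂ (Set.range fun q : D × Fin 3 =>
      monomial q.1.1 (1 : ℂ) * h q.2) := by
  obtain ⟨c, rfl⟩ := Ideal.mem_span_range_iff_exists_fun.1 hfJ
  have h1 : ∑ i, c i * h i = ∑ i, homogeneousComponent k (c i) * h i := by
    have h2 := homogeneousComponent_of_mem (m := k + n) hf
    rw [if_pos rfl] at h2
    rw [← h2, map_sum]
    exact Finset.sum_congr rfl fun i _ => homogeneousComponent_mul_of_isHomogeneous (hh i) k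
  rw [h1]
  refine Submodule.sum_mem _ fun i _ => ?_
  rw [(homogeneousComponent k (c i)).as_sum, Finset.sum_mul]
  refine Submodule.sum_mem _ fun d hd => ?_
  have hdk : d.degree = k := by
    rw [mem_support_iff, coeff_homogeneousComponent] at hd
    by_contra hne
    exact hd (if_neg hne)
  have hmon : ∀ r : ℂ, (monomial d r : R3) = r • monomial d 1 := fun r => by
    rw [smul_monomial, smul_eq_mul, mul_one]
  rw [hmon, smul_mul_assoc]
  refine Submodule.smul_mem _ _ (Submodule.subset_span ⟨(⟨d, (hD d).2 hdk⟩, i), rfl⟩)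

/-- The property of the coefficients provided by `exists_good_combs`, with the exponent `k` fixed,
passes from one matrix `a₀` to a nonempty Zariski open set of matrices. -/
lemma exists_generic {n k : ℕ} {g : Fin 4 → R3} (hg : ∀ j, (g j).IsHomogeneous n)
    {a₀ : Fin 3 → Fin 4 → ℂ}
    (h : ∀ f ∈ idealOfVars (Fin 3) ℂ ^ k, ∀ j,
      f * g j ∈ Ideal.span (Set.range fun i => comb g (a₀ i))) :
    ∃ G : MvPolynomial (Fin 3 × Fin 4) ℂ, G ≠ 0 ∧ ∀ a : Fin 3 → Fin 4 → ℂ,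
      eval (fun p : Fin 3 × Fin 4 => a p.1 p.2) G ≠ 0 →
      ∀ f ∈ idealOfVars (Fin 3) ℂ ^ k, ∀ j,
        f * g j ∈ Ideal.span (Set.range fun i => comb g (a i)) := by
  classical
  obtain ⟨D, hD⟩ : ∃ D : Finset (Fin 3 →₀ ℕ), ∀ d, d ∈ D ↔ d.degree = k :=
    ⟨Finset.univ.finsuppAntidiag k, fun d => by
      simp [Finset.mem_finsuppAntidiag, Finsupp.degree_eq_sum]⟩
  let v : D × Fin 4 → R3 := fun s => monomial s.1.1 (1 : ℂ) * g s.2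
  let A : D × Fin 3 → D × Fin 4 → MvPolynomial (Fin 3 × Fin 4) ℂ := fun q s =>
    if q.1 = s.1 then X (q.2, s.2) else 0
  have hA : ∀ a : Fin 3 → Fin 4 → ℂ,
      (fun q => ∑ t, eval (fun p : Fin 3 × Fin 4 => a p.1 p.2) (A q t) • v t) =
      fun q : D × Fin 3 => monomial q.1.1 (1 : ℂ) * comb g (a q.2) := by
    intro a
    funext q
    rw [Fintype.sum_prod_type, Finset.sum_eq_single q.1]
    · simp [A, v, comb_apply, Finset.mul_sum, smul_eq_C_mul, mul_left_comm]
    · intro b _ hb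
      simp [A, hb.symm]
    · simp
  obtain ⟨G, hG, hGa⟩ := exists_ne_zero_span v A (fun p : Fin 3 × Fin 4 => a₀ p.1 p.2) (by
    rintro ⟨d, j⟩
    rw [hA a₀]
    refine mem_span_monomial_mul hD (fun i => comb_isHomogeneous hg (a₀ i)) ?_ (h _ ?_ j)
    · exact (isHomogeneous_monomial _ ((hD _).1 d.2)).mul (hg j)
    · exact (monomial_mem_pow_idealOfVars_iff _ _ one_ne_zero).2 ((hD _).1 d.2).ge)
  refine ⟨G, hG, fun a ha f hf j => ?_⟩
  have h1 := hGa _ ha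
  rw [hA a] at h1
  set J := Ideal.span (Set.range fun i => comb g (a i))
  have h2 : Submodule.span ℂ (Set.range fun q : D × Fin 3 =>
      monomial q.1.1 (1 : ℂ) * comb g (a q.2)) ≤ J.restrictScalars ℂ := by
    rw [Submodule.span_le]
    rintro _ ⟨q, rfl⟩
    exact Ideal.mul_mem_left _ _ (Ideal.subset_span ⟨q.2, rfl⟩)
  have h3 : idealOfVars (Fin 3) ℂ ^ k ≤ J.colon {g j} := by
    rw [pow_idealOfVars_eq_span, Ideal.span_le]
    rintro _ ⟨d, hd, rfl⟩
    exact Submodule.mem_colon_singleton.2 (h2 (h1 (⟨d, (hD d).2 hd⟩, j)))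
  exact Submodule.mem_colon_singleton.1 (h3 hf)

theorem stmt9 (n : ℕ) (hn : 1 ≤ n) (x y z w : R3)
    (hx : x.IsHomogeneous n) (hy : y.IsHomogeneous n)
    (hz : z.IsHomogeneous n) (hw : w.IsHomogeneous n)
    -- `x, y, z, w` have no common factor
    (hcf : ∀ p : R3, p ∣ x → p ∣ y → p ∣ z → p ∣ w → IsUnit p)
    -- `I = ⟨x,y,z,w⟩` is a local complete intersection
    (hlci : IsLCI (Ideal.span {x, y, z, w})) :
    ∃ G : MvPolynomial (Fin 3 × Fin 4) ℂ, G ≠ 0 ∧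
      ∀ a : Fin 3 → Fin 4 → ℂ,
        MvPolynomial.eval (fun p : Fin 3 × Fin 4 => a p.1 p.2) G ≠ 0 →
        satSet (Ideal.span
            {∑ j : Fin 4, MvPolynomial.C (a 0 j) * ![x, y, z, w] j,
             ∑ j : Fin 4, MvPolynomial.C (a 1 j) * ![x, y, z, w] j,
             ∑ j : Fin 4, MvPolynomial.C (a 2 j) * ![x, y, z, w] j}) =
          satSet (Ideal.span {x, y, z, w}) ∧
        w ∈ satSet (Ideal.span
            {∑ j : Fin 4, MvPolynomial.C (a 0 j) * ![x, y, z, w] j,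
             ∑ j : Fin 4, MvPolynomial.C (a 1 j) * ![x, y, z, w] j,
             ∑ j : Fin 4, MvPolynomial.C (a 2 j) * ![x, y, z, w] j}) := by
  set g : Fin 4 → R3 := ![x, y, z, w] with hgdef
  have hrange : ({x, y, z, w} : Set R3) = Set.range g := by
    ext f
    simp [hgdef, eq_comm]
    tauto
  have hg : ∀ j, (g j).IsHomogeneous n := by
    intro j
    fin_cases j
    exacts [hx, hy, hz, hw]
  have hcf' : ∀ p : R3, (∀ j, p ∣ g j) → IsUnit p := fun p hp =>
    hcf p (hp 0) (hp 1) (hp 2) (hp 3)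
  rw [hrange] at hlci ⊢
  obtain ⟨a₀, k, hk⟩ := exists_good_combs hg hcf' hlci
  obtain ⟨G, hG, hGa⟩ := exists_generic hg hk
  refine ⟨G, hG, fun a ha => ?_⟩
  have hrange' : ({∑ j : Fin 4, C (a 0 j) * g j, ∑ j : Fin 4, C (a 1 j) * g j,
      ∑ j : Fin 4, C (a 2 j) * g j} : Set R3) = Set.range fun i => comb g (a i) := by
    ext f
    simp only [← comb_apply]
    simp [Fin.exists_fin_succ, eq_comm]
  have hvars : (Ideal.span {X 0, X 1, X 2} : Ideal R3) = idealOfVars (Fin 3) ℂ := by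
    congr 1
    ext f
    simp [Fin.exists_fin_succ, eq_comm]
  rw [hrange']
  set J := Ideal.span (Set.range fun i => comb g (a i))
  have hJI : J ≤ Ideal.span (Set.range g) := by
    rw [Ideal.span_le]
    rintro _ ⟨i, rfl⟩
    exact comb_mem g (a i)
  have hmul : ∀ f ∈ idealOfVars (Fin 3) ℂ ^ k, ∀ r ∈ Ideal.span (Set.range g), f * r ∈ J := by
    intro f hf r hr
    have : Ideal.span (Set.range g) ≤ J.colon {f} := by
      rw [Ideal.span_le]
      rintro _ ⟨j, rfl⟩
      rw [SetLike.mem_coe, Submodule.mem_colon_singleton, smul_eq_mul, mul_comm]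
      exact hGa a ha f hf j
    have h2 := Submodule.mem_colon_singleton.1 (this hr)
    rwa [smul_eq_mul, mul_comm] at h2
  refine ⟨Set.Subset.antisymm ?_ ?_, k, ?_⟩
  · rintro f ⟨l, hl⟩
    exact ⟨l, fun r hr => hJI (hl r hr)⟩
  · rintro f ⟨l, hl⟩
    refine ⟨k + l, fun r hr => ?_⟩
    rw [hvars] at hl hr
    have : idealOfVars (Fin 3) ℂ ^ (k + l) ≤ J.colon {f} := by
      rw [pow_add, Ideal.mul_le]
      intro p hp q hq
      rw [Submodule.mem_colon_singleton, smul_eq_mul, mul_assoc]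
      exact hmul p hp _ (hl q hq)
    exact Submodule.mem_colon_singleton.1 (this hr)
  · intro f hf
    rw [hvars] at hf
    exact hGa a ha f hf 3
end

section
/- Let S = ℂ[s,t] and let p₁, …, p_r ∈ S be ℂ-linearly independent homogeneous polynomials of degree n ≥ 1 whose only common zero in ℂ² is (0,0). Then for every integer k ≥ 2n − r + 1, every homogeneous polynomial of degree k in S lies in the ideal ⟨p₁, …, p_r⟩; that is, the degree-k graded piece of ⟨p₁, …, p_r⟩ equals S_k for all k ≥ 2n − r + 1. -/
/-!
Setting `t = 1` identifies `S_m` with the univariate polynomials of degree at most `m`, and the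
degree-`m` piece of the ideal `I = ⟨p₁, …, p_r⟩` with a subspace `J_m` (`idealPiece`). Since
`S₁ · I_m ⊆ I_{m+1}`, we have `J_m + x J_m ⊆ J_{m+1}`.

The key point is a growth estimate. Let `V ≠ 0` be a finite-dimensional space of univariate
polynomials and `H = {h ∈ V : x h ∈ V}`. Then `dim (V + xV) = 2 dim V - dim H`, and `H ≠ V`, so
`dim (V + xV) ≥ dim V + 1`. If equality holds then, by induction on `dim V` applied to `H`, the
space `V` is `g · {q : deg q < dim V}` for some polynomial `g` (`exists_eq_map_degreeLT`). If moreover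
the elements of `V` (of degree at most `m`) have no common zero on `ℙ¹`, then `g` is constant and `V`
consists of all polynomials of degree at most `m` (`growth`).

As the `p i` have no common zero on `ℙ¹`, neither have the elements of `J_m` for `m ≥ n`. Hence
`dim J_{n+j} ≥ min (r + 2j, n + j + 1)`, and for `j ≥ n + 1 - r` the minimum is
`n + j + 1 = dim S_{n+j}`.
-/

open MvPolynomial

/-- `S2` is the polynomial ring `ℂ[s,t]`. -/
abbrev S2 : Type := MvPolynomial (Fin 2) ℂ

/-! ### Growth of spaces of univariate polynomials -/

section Growth

variable {K : Type*} [Field K]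

/-- The subspace `x V`. -/
noncomputable def xMul (V : Submodule K (Polynomial K)) : Submodule K (Polynomial K) :=
  V.map (LinearMap.mulLeft K (Polynomial.X : Polynomial K))

/-- The subspace of those `h ∈ V` with `x h ∈ V`. -/
noncomputable def xStable (V : Submodule K (Polynomial K)) : Submodule K (Polynomial K) :=
  V ⊓ V.comap (LinearMap.mulLeft K (Polynomial.X : Polynomial K))

lemma mem_xStable {V : Submodule K (Polynomial K)} {h : Polynomial K} :
    h ∈ xStable V ↔ h ∈ V ∧ Polynomial.X * h ∈ V := by
  simp [xStable]

lemma finrank_map_mulLeft {g : Polynomial K} (hg : g ≠ 0) (V : Submodule K (Polynomial K)) :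
    Module.finrank K (V.map (LinearMap.mulLeft K g)) = Module.finrank K V :=
  (Submodule.equivMapOfInjective _ (fun _ _ h => mul_left_cancel₀ hg h) V).finrank_eq.symm

lemma finrank_degreeLT (m : ℕ) : Module.finrank K (Polynomial.degreeLT K m) = m := by
  rw [(Polynomial.degreeLTEquiv K m).finrank_eq]; simp

instance finiteDimensional_degreeLT (m : ℕ) : FiniteDimensional K (Polynomial.degreeLT K m) :=
  Module.Finite.equiv (Polynomial.degreeLTEquiv K m).symm

lemma finiteDimensional_of_le {V : Submodule K (Polynomial K)} {m : ℕ}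
    (hV : V ≤ Polynomial.degreeLT K m) : FiniteDimensional K V :=
  Submodule.finiteDimensional_of_le hV

lemma finrank_sup_xMul (V : Submodule K (Polynomial K)) [FiniteDimensional K V] :
    Module.finrank K (V ⊔ xMul V : Submodule K (Polynomial K)) + Module.finrank K (xStable V)
      = 2 * Module.finrank K V := by
  have hinf : V ⊓ xMul V = (xStable V).map (LinearMap.mulLeft K Polynomial.X) := by
    ext q
    simp only [xMul, Submodule.mem_inf, Submodule.mem_map, mem_xStable, LinearMap.mulLeft_apply]
    constructor
    · rintro ⟨hq, h, hh, rfl⟩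
      exact ⟨h, ⟨hh, hq⟩, rfl⟩
    · rintro ⟨h, ⟨hh, hq⟩, rfl⟩
      exact ⟨hq, h, hh, rfl⟩
  have : FiniteDimensional K (xMul V) := by unfold xMul; infer_instance
  have h := Submodule.finrank_sup_add_finrank_inf_eq V (xMul V)
  have hx : Module.finrank K (xMul V) = Module.finrank K V :=
    finrank_map_mulLeft Polynomial.X_ne_zero V
  rw [hinf, finrank_map_mulLeft Polynomial.X_ne_zero, hx] at h
  omega

lemma xStable_le (V : Submodule K (Polynomial K)) : xStable V ≤ V := inf_le_left

/-- A nonzero space of polynomials of bounded degree is not closed under multiplication by `x`. -/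
lemma finrank_xStable_lt {V : Submodule K (Polynomial K)} {m : ℕ}
    (hV : V ≤ Polynomial.degreeLT K m) (h0 : V ≠ ⊥) :
    Module.finrank K (xStable V) < Module.finrank K V := by
  have := finiteDimensional_of_le hV
  apply Submodule.finrank_lt_finrank_of_lt
  refine lt_of_le_of_ne (xStable_le V) fun heq => ?_
  obtain ⟨q, hq, hq0⟩ := Submodule.exists_mem_ne_zero_of_ne_bot h0
  have hpow : ∀ i : ℕ, Polynomial.X ^ i * q ∈ V := by
    intro i
    induction i with
    | zero => simpa using hq
    | succ i ih =>
      rw [← heq] at ih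
      rw [pow_succ', mul_assoc]
      exact (mem_xStable.1 ih).2
  have h := Polynomial.mem_degreeLT.1 (hV (hpow m))
  rw [Polynomial.degree_mul, Polynomial.degree_X_pow, Polynomial.degree_eq_natDegree hq0] at h
  norm_cast at h
  omega

lemma sup_xMul_xStable_le (V : Submodule K (Polynomial K)) : xStable V ⊔ xMul (xStable V) ≤ V := by
  refine sup_le (xStable_le V) ?_
  rintro _ ⟨h, hh, rfl⟩
  exact (mem_xStable.1 hh).2

lemma eq_map_of_le {V : Submodule K (Polynomial K)} [FiniteDimensional K V] {g : Polynomial K}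
    (hg : g ≠ 0) {d : ℕ} (hd : Module.finrank K V = d)
    (hle : ∀ q ∈ Polynomial.degreeLT K d, g * q ∈ V) :
    V = (Polynomial.degreeLT K d).map (LinearMap.mulLeft K g) := by
  symm
  apply Submodule.eq_of_le_of_finrank_eq
  · rintro _ ⟨q, hq, rfl⟩
    exact hle q hq
  · rw [finrank_map_mulLeft hg, finrank_degreeLT, hd]

/-- Spaces of minimal growth are, up to a common factor `g`, full spaces of polynomials of bounded
degree. -/
lemma exists_eq_map_degreeLT (m d : ℕ) : ∀ V : Submodule K (Polynomial K),
    V ≤ Polynomial.degreeLT K m → Module.finrank K V = d + 1 →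
    Module.finrank K (V ⊔ xMul V : Submodule K (Polynomial K)) ≤ d + 2 →
    ∃ g : Polynomial K, g ≠ 0 ∧
      V = (Polynomial.degreeLT K (d + 1)).map (LinearMap.mulLeft K g) := by
  induction d with
  | zero =>
    intro V hV hd hgrow
    have := finiteDimensional_of_le hV
    have h0 : V ≠ ⊥ := by
      rintro rfl
      simp at hd
    obtain ⟨g, hg, hg0⟩ := Submodule.exists_mem_ne_zero_of_ne_bot h0
    refine ⟨g, hg0, eq_map_of_le hg0 hd fun q hq => ?_⟩
    have hq' : q.degree ≤ 0 := by
      rw [Polynomial.degree_le_zero_iff]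
      rw [Polynomial.mem_degreeLT, Polynomial.degree_lt_iff_coeff_zero] at hq
      ext i
      rcases i with _ | i
      · simp
      · rw [hq _ (by omega), Polynomial.coeff_C_succ]
    rw [Polynomial.eq_C_of_degree_le_zero hq', mul_comm, ← Polynomial.smul_eq_C_mul]
    exact V.smul_mem _ hg
  | succ d ih =>
    intro V hV hd hgrow
    have := finiteDimensional_of_le hV
    have h0 : V ≠ ⊥ := by
      rintro rfl
      simp at hd
    have hlt := finrank_xStable_lt hV h0
    have hsum := finrank_sup_xMul V
    have hH : Module.finrank K (xStable V) = d + 1 := by omega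
    have hHgrow := Submodule.finrank_mono (sup_xMul_xStable_le V)
    obtain ⟨g, hg0, hg⟩ := ih (xStable V) ((xStable_le V).trans hV) hH (by omega)
    have hmem : ∀ q ∈ Polynomial.degreeLT K (d + 1), g * q ∈ xStable V := by
      intro q hq
      rw [hg]
      exact ⟨q, hq, rfl⟩
    refine ⟨g, hg0, eq_map_of_le hg0 hd fun q hq => ?_⟩
    rw [← Polynomial.X_mul_divX_add q, mul_add]
    refine V.add_mem ?_ ?_
    · rw [mul_left_comm]
      refine (mem_xStable.1 (hmem q.divX ?_)).2
      rw [Polynomial.mem_degreeLT, Polynomial.degree_lt_iff_coeff_zero] at hq ⊢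
      intro i hi
      rw [Polynomial.coeff_divX]
      exact hq _ (by omega)
    · refine xStable_le V (hmem _ ?_)
      rw [Polynomial.mem_degreeLT]
      exact lt_of_le_of_lt Polynomial.degree_C_le (by exact_mod_cast Nat.succ_pos d)

/-- The hypothesis `hinf` says that the point at infinity is not a common zero of `V`, when the
elements of `V` are regarded as binary forms of degree `m`. -/
lemma growth [IsAlgClosed K] {V : Submodule K (Polynomial K)} {m : ℕ}
    (hV : V ≤ Polynomial.degreeLT K (m + 1))
    (hroot : ∀ a : K, ∃ q ∈ V, q.eval a ≠ 0) (hinf : ∃ q ∈ V, q.coeff m ≠ 0) :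
    V = Polynomial.degreeLT K (m + 1) ∨ Module.finrank K V + 2 ≤
      Module.finrank K (V ⊔ xMul V : Submodule K (Polynomial K)) := by
  by_contra! hcon
  obtain ⟨hne, hlt⟩ := hcon
  have := finiteDimensional_of_le hV
  obtain ⟨q, hq, hqm⟩ := hinf
  have hpos : Module.finrank K V ≠ 0 := by
    intro h
    rw [Submodule.finrank_eq_zero] at h
    subst h
    simp_all
  obtain ⟨d, hd⟩ := Nat.exists_eq_succ_of_ne_zero hpos
  obtain ⟨g, hg0, hg⟩ := exists_eq_map_degreeLT (m + 1) d V hV hd (by omega)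
  have hdeg : g.degree = 0 := by
    by_contra hdeg
    obtain ⟨a, ha⟩ := IsAlgClosed.exists_root g hdeg
    obtain ⟨f, hf, hfa⟩ := hroot a
    rw [hg] at hf
    obtain ⟨u, -, rfl⟩ := hf
    apply hfa
    simp [ha.eq_zero]
  have hdm : m ≤ d := by
    rw [hg] at hq
    obtain ⟨u, hu, rfl⟩ := hq
    have h1 := Polynomial.le_degree_of_ne_zero hqm
    rw [LinearMap.mulLeft_apply, Polynomial.degree_mul, hdeg, zero_add] at h1
    have h2 := lt_of_le_of_lt h1 (Polynomial.mem_degreeLT.1 hu)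
    norm_cast at h2
    omega
  refine hne (Submodule.eq_of_le_of_finrank_le hV ?_)
  rw [finrank_degreeLT, hd]
  omega

end Growth

/-! ### Dehomogenization -/

/-- Homogenization to degree `m`: the linear map `x ^ i ↦ s ^ i t ^ (m - i)`. It is only meaningful
on polynomials of degree at most `m`, because of the truncated subtraction. -/
noncomputable def homog (m : ℕ) : Polynomial ℂ →ₗ[ℂ] S2 :=
  Polynomial.lsum fun i => LinearMap.toSpanSingleton ℂ S2 (X 0 ^ i * X 1 ^ (m - i))

lemma homog_monomial (m i : ℕ) (c : ℂ) :
    homog m (Polynomial.monomial i c) = c • (X 0 ^ i * X 1 ^ (m - i)) := by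
  simp [homog, Polynomial.lsum_apply, Polynomial.sum_monomial_index]

/-- Dehomogenization `f(s, t) ↦ f(x, 1)`. -/
noncomputable def dehom : S2 →ₐ[ℂ] Polynomial ℂ := aeval ![Polynomial.X, 1]

lemma dehom_monomial (d : Fin 2 →₀ ℕ) (c : ℂ) :
    dehom (monomial d c) = Polynomial.monomial (d 0) c := by
  simp [dehom, aeval_monomial, Finsupp.prod_fintype, Polynomial.C_mul_X_pow_eq_monomial]

lemma add_eq_of_mem_support {f : S2} {k : ℕ} (hf : f.IsHomogeneous k) {d : Fin 2 →₀ ℕ}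
    (hd : d ∈ f.support) : d 0 + d 1 = k := by
  have h := hf (mem_support_iff.1 hd)
  rw [Finsupp.weight_apply, Finsupp.sum_fintype _ _ (by simp)] at h
  simpa using h

lemma homog_dehom {f : S2} {k : ℕ} (hf : f.IsHomogeneous k) : homog k (dehom f) = f := by
  conv_rhs => rw [f.as_sum]
  conv_lhs => rw [f.as_sum]
  rw [map_sum, map_sum]
  refine Finset.sum_congr rfl fun d hd => ?_
  have h := add_eq_of_mem_support hf hd
  rw [dehom_monomial, homog_monomial, monomial_eq, Finsupp.prod_fintype _ _ (by simp),
    Fin.prod_univ_two, smul_eq_C_mul, show k - d 0 = d 1 by omega]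

lemma dehom_mem {f : S2} {k : ℕ} (hf : f.IsHomogeneous k) :
    dehom f ∈ Polynomial.degreeLT ℂ (k + 1) := by
  rw [f.as_sum, map_sum]
  refine Submodule.sum_mem _ fun d hd => ?_
  have h := add_eq_of_mem_support hf hd
  rw [dehom_monomial, Polynomial.mem_degreeLT]
  refine lt_of_le_of_lt (Polynomial.degree_monomial_le _ _) ?_
  norm_cast
  omega

lemma homog_X_mul (m : ℕ) (q : Polynomial ℂ) :
    homog (m + 1) (Polynomial.X * q) = X 0 * homog m q := by
  induction q using Polynomial.induction_on' with
  | add a b ha hb => rw [mul_add, map_add, map_add, mul_add, ha, hb]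
  | monomial i c =>
    rw [Polynomial.X_mul_monomial, homog_monomial, homog_monomial, mul_smul_comm,
      Nat.add_sub_add_right, pow_succ']
    ring_nf

lemma homog_eq_sum {m N : ℕ} {q : Polynomial ℂ} (hq : q ∈ Polynomial.degreeLT ℂ (m + 1)) :
    homog N q = ∑ i ∈ Finset.range (m + 1), q.coeff i • (X 0 ^ i * X 1 ^ (N - i) : S2) := by
  have hdeg : q.natDegree < m + 1 := by
    have h := Polynomial.mem_degreeLT.1 hq
    exact Nat.lt_succ_of_le (Polynomial.natDegree_le_of_degree_le (Order.lt_succ_iff.1 h))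
  conv_lhs => rw [q.as_sum_range' (m + 1) hdeg]
  simp only [map_sum, homog_monomial]

lemma homog_succ {m : ℕ} {q : Polynomial ℂ} (hq : q ∈ Polynomial.degreeLT ℂ (m + 1)) :
    homog (m + 1) q = X 1 * homog m q := by
  rw [homog_eq_sum hq, homog_eq_sum hq, Finset.mul_sum]
  refine Finset.sum_congr rfl fun i hi => ?_
  have hi' := Finset.mem_range.1 hi
  rw [mul_smul_comm, show m + 1 - i = (m - i) + 1 by omega, pow_succ']
  ring_nf

lemma eval_homog_infinity {m : ℕ} {q : Polynomial ℂ}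
    (hq : q ∈ Polynomial.degreeLT ℂ (m + 1)) :
    MvPolynomial.eval ![1, 0] (homog m q) = q.coeff m := by
  rw [homog_eq_sum hq, map_sum, Finset.sum_eq_single m]
  · simp
  · intro i hi him
    have hi' := Finset.mem_range.1 hi
    have : m - i ≠ 0 := by omega
    simp [this]
  · simp

lemma eval_dehom (a : ℂ) (f : S2) :
    (dehom f).eval a = MvPolynomial.eval ![a, 1] f := by
  induction f using MvPolynomial.induction_on with
  | C c => simp [dehom]
  | add f g hf hg => simp [hf, hg]
  | mul_X f i hf =>
    rw [map_mul, Polynomial.eval_mul, hf, map_mul]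
    fin_cases i <;> simp [dehom]

/-! ### The graded pieces of the ideal -/

/-- The degree-`m` piece of `I`, dehomogenized: polynomials of degree at most `m` whose
homogenization to degree `m` lies in `I`. -/
noncomputable def idealPiece (I : Ideal S2) (m : ℕ) : Submodule ℂ (Polynomial ℂ) :=
  Polynomial.degreeLT ℂ (m + 1) ⊓ (I.restrictScalars ℂ).comap (homog m)

lemma mem_idealPiece {I : Ideal S2} {m : ℕ} {q : Polynomial ℂ} :
    q ∈ idealPiece I m ↔ q ∈ Polynomial.degreeLT ℂ (m + 1) ∧ homog m q ∈ I := by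
  simp [idealPiece]

lemma mem_idealPiece_succ {I : Ideal S2} {m : ℕ} {q : Polynomial ℂ} (hq : q ∈ idealPiece I m) :
    q ∈ idealPiece I (m + 1) := by
  rw [mem_idealPiece] at hq ⊢
  refine ⟨Polynomial.degreeLT_mono (by omega) hq.1, ?_⟩
  rw [homog_succ hq.1]
  exact I.mul_mem_left _ hq.2

lemma X_mul_mem_idealPiece {I : Ideal S2} {m : ℕ} {q : Polynomial ℂ} (hq : q ∈ idealPiece I m) :
    Polynomial.X * q ∈ idealPiece I (m + 1) := by
  rw [mem_idealPiece] at hq ⊢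
  refine ⟨?_, ?_⟩
  · have h := hq.1
    rw [Polynomial.mem_degreeLT, Polynomial.degree_lt_iff_coeff_zero] at h ⊢
    intro i hi
    obtain ⟨j, rfl⟩ : ∃ j, i = j + 1 := ⟨i - 1, by omega⟩
    rw [Polynomial.coeff_X_mul]
    exact h j (by omega)
  · rw [homog_X_mul]
    exact I.mul_mem_left _ hq.2

lemma sup_xMul_idealPiece_le (I : Ideal S2) (m : ℕ) :
    idealPiece I m ⊔ xMul (idealPiece I m) ≤ idealPiece I (m + 1) := by
  refine sup_le (fun q hq => mem_idealPiece_succ hq) ?_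
  rintro _ ⟨q, hq, rfl⟩
  exact X_mul_mem_idealPiece hq

lemma finrank_idealPiece_ge {I : Ideal S2} {n r : ℕ}
    (hr : r ≤ Module.finrank ℂ (idealPiece I n))
    (hroot : ∀ a : ℂ, ∃ q ∈ idealPiece I n, q.eval a ≠ 0)
    (hinf : ∃ q ∈ idealPiece I n, q.coeff n ≠ 0) (j : ℕ) :
    (∀ a : ℂ, ∃ q ∈ idealPiece I (n + j), q.eval a ≠ 0) ∧
    (∃ q ∈ idealPiece I (n + j), q.coeff (n + j) ≠ 0) ∧
    min (r + 2 * j) (n + j + 1) ≤ Module.finrank ℂ (idealPiece I (n + j)) := by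
  induction j with
  | zero => exact ⟨hroot, hinf, by simpa using Or.inl hr⟩
  | succ j ih =>
    obtain ⟨h1, h2, h3⟩ := ih
    have hle : idealPiece I (n + j) ≤ Polynomial.degreeLT ℂ (n + j + 1) := inf_le_left
    have hle' : idealPiece I (n + j + 1) ≤ Polynomial.degreeLT ℂ (n + j + 1 + 1) := inf_le_left
    have := finiteDimensional_of_le hle'
    have hmono := Submodule.finrank_mono (sup_xMul_idealPiece_le I (n + j))
    have hg := growth hle h1 h2
    rw [← add_assoc]
    refine ⟨fun a => ?_, ?_, ?_⟩
    · obtain ⟨q, hq, hqa⟩ := h1 a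
      exact ⟨q, mem_idealPiece_succ hq, hqa⟩
    · obtain ⟨q, hq, hqa⟩ := h2
      exact ⟨_, X_mul_mem_idealPiece hq, by rwa [Polynomial.coeff_X_mul]⟩
    · rcases hg with hfull | hg
      · -- if `J_m` is everything then so is `J_{m+1}`, since `J_m + x J_m` has larger dimension
        -- than the nonzero space `J_m`
        have hfr : Module.finrank ℂ (idealPiece I (n + j)) = n + j + 1 := by
          rw [hfull, finrank_degreeLT]
        have := finiteDimensional_of_le hle
        have hlt := finrank_xStable_lt hle (by
          intro h
          rw [h] at hfr
          simp at hfr)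
        have hsum := finrank_sup_xMul (idealPiece I (n + j))
        omega
      · omega

theorem stmt10 (n r : ℕ) (hn : 1 ≤ n) (p : Fin r → S2)
    (hhom : ∀ i, (p i).IsHomogeneous n)
    (hli : LinearIndependent ℂ p)
    -- the only common zero of the `p i` in `ℂ²` is the origin
    (hzero : ∀ v : Fin 2 → ℂ, (∀ i, MvPolynomial.eval v (p i) = 0) → v = 0) :
    -- every homogeneous polynomial of degree `k ≥ 2n - r + 1` lies in `⟨p₁,…,p_r⟩`
    ∀ k : ℕ, 2 * n + 1 ≤ k + r →
      ∀ f : S2, f.IsHomogeneous k → f ∈ Ideal.span (Set.range p) := by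
  intro k hk f hf
  set I := Ideal.span (Set.range p) with hI
  have hle : ∀ m, idealPiece I m ≤ Polynomial.degreeLT ℂ (m + 1) := fun m => inf_le_left
  have hfin : ∀ m, FiniteDimensional ℂ (idealPiece I m) := fun m => finiteDimensional_of_le (hle m)
  have hp : ∀ i, dehom (p i) ∈ idealPiece I n := fun i =>
    mem_idealPiece.2 ⟨dehom_mem (hhom i), by
      rw [homog_dehom (hhom i)]
      exact Ideal.subset_span ⟨i, rfl⟩⟩
  have hr : r ≤ Module.finrank ℂ (idealPiece I n) := by
    have h1 : LinearIndependent ℂ fun i => dehom (p i) := by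
      -- `homog n` maps this family back to `p`
      refine LinearIndependent.of_comp (homog n) ?_
      convert hli using 1
      funext i
      exact homog_dehom (hhom i)
    have h2 : LinearIndependent ℂ fun i => (⟨dehom (p i), hp i⟩ : idealPiece I n) :=
      LinearIndependent.of_comp (idealPiece I n).subtype h1
    simpa using h2.fintype_card_le_finrank
  have hroot : ∀ a : ℂ, ∃ q ∈ idealPiece I n, q.eval a ≠ 0 := by
    intro a
    by_contra! hcon
    have h := hzero ![a, 1] fun i => by rw [← eval_dehom]; exact hcon _ (hp i)
    simpa using congrFun h 1
  have hinf : ∃ q ∈ idealPiece I n, q.coeff n ≠ 0 := by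
    by_contra! hcon
    have h := hzero ![1, 0] fun i => by
      rw [← homog_dehom (hhom i), eval_homog_infinity (dehom_mem (hhom i))]
      exact hcon _ (hp i)
    simpa using congrFun h 0
  -- linear independence inside the `(n + 1)`-dimensional `S_n` forces `n ≤ k`
  have hrn : r ≤ n + 1 := by
    have := Submodule.finrank_mono (hle n)
    rw [finrank_degreeLT] at this
    omega
  obtain ⟨j, rfl⟩ : ∃ j, k = n + j := ⟨k - n, by omega⟩
  obtain ⟨-, -, hdim⟩ := finrank_idealPiece_ge hr hroot hinf j
  have hfull : idealPiece I (n + j) = Polynomial.degreeLT ℂ (n + j + 1) := by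
    refine Submodule.eq_of_le_of_finrank_le (hle _) ?_
    rw [finrank_degreeLT]
    omega
  have hmem := dehom_mem hf
  rw [← hfull, mem_idealPiece, homog_dehom hf] at hmem
  exact hmem.2
end

section
/- Let p₁, …, p_r ∈ R be ℂ-linearly independent homogeneous polynomials of degree n with r ≥ 4, such that the set of their common zeros in ℂ³ ∖ {0}, taken up to nonzero scalar multiples, is finite, and such that the rational map to ℙ^{r−1} they define is generically finite in the following sense: there exists v₀ ∈ ℂ³ with (p₁(v₀),…,p_r(v₀)) ≠ 0 such that the set of points of the projectivization of ℂ³ represented by vectors v with (p₁(v),…,p_r(v)) = λ·(p₁(v₀),…,p_r(v₀)) for some λ ∈ ℂ ∖ {0} is finite. Then there is a nonzero polynomial g ∈ ℂ[A,B,C] such that for every (a,b,c) ∈ ℂ³ with g(a,b,c) ≠ 0, the images of p₁, …, p_r in the quotient ring R/⟨as+bt+cu⟩ span a ℂ-vector space of dimension at least 3. -/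
/-!
Write `F = (p₁, …, p_r) : ℂ³ → ℂ^r`. The key claim is that some plane through the origin of `ℂ³`
contains three vectors whose images under `F` are linearly independent.

Suppose not. As the `pᵢ` are linearly independent and `r ≥ 4`, there are `v₀, v₁, v₂, v₃` with
linearly independent images, and `v₀, v₁, v₂` is then a basis of `ℂ³`. For a generic
`x = c₀v₀ + c₁v₁ + c₂v₂`, put `y = c₀v₀ + c₁v₁`. The vectors `v₀, v₁, y` lie in a plane, so
`F y ∈ ⟨F v₀, F v₁⟩`, and generically `F y ≠ 0`. The vectors `y, v₂, x` lie in a plane, so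
`F x ∈ ⟨F y, F v₂⟩ ⊆ ⟨F v₀, F v₁, F v₂⟩`. A functional that vanishes on this span and not at
`F v₃` then gives a nonzero polynomial vanishing at generic points, a contradiction
(`exists_coplanar_indep`).

Given three such vectors `uₖ` in the plane `A₀^⊥`, write `uₖ = zₖ × A₀` and choose combinations `qⱼ`
of the `pᵢ` with `qⱼ(uₖ) = δⱼₖ`. The polynomial `g(A) = det (qⱼ(zₖ × A))` is nonzero at `A₀`, and
wherever it is nonzero the `qⱼ` are linearly independent modulo the linear form with
coefficients `A`, because each `zₖ × A` is a zero of that form.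
-/

open MvPolynomial

/-- The ideal generated by the linear form `as + bt + cu`. -/
noncomputable def lineIdeal (a b c : ℂ) : Ideal R3 :=
  Ideal.span {C a * X 0 + C b * X 1 + C c * X 2}

/-- The map `F = (p₁, …, p_r)`. -/
noncomputable def evalVec {r : ℕ} (p : Fin r → R3) (v : Fin 3 → ℂ) : Fin r → ℂ :=
  fun i => eval v (p i)

/-- The pullback of the linear form `φ` along `F`, as a polynomial. -/
noncomputable def pullForm {r : ℕ} (p : Fin r → R3) (φ : (Fin r → ℂ) →ₗ[ℂ] ℂ) : R3 :=
  ∑ i, φ (Pi.single i 1) • p i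

lemma eval_pullForm {r : ℕ} (p : Fin r → R3) (φ : (Fin r → ℂ) →ₗ[ℂ] ℂ) (v : Fin 3 → ℂ) :
    eval v (pullForm p φ) = φ (evalVec p v) := by
  rw [LinearMap.pi_apply_eq_sum_univ φ (evalVec p v)]
  simp only [pullForm, map_sum, smul_eval, evalVec, smul_eq_mul]
  refine Finset.sum_congr rfl fun i _ => ?_
  rw [mul_comm]
  congr 2
  ext j
  simp [Pi.single_apply, eq_comm]

lemma pullForm_mem {r : ℕ} (p : Fin r → R3) (φ : (Fin r → ℂ) →ₗ[ℂ] ℂ) :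
    pullForm p φ ∈ Submodule.span ℂ (Set.range p) :=
  Submodule.sum_mem _ fun i _ => Submodule.smul_mem _ _ (Submodule.subset_span ⟨i, rfl⟩)

lemma exists_dual_family {ι V : Type*} [DecidableEq ι] [AddCommGroup V] [Module ℂ V] {e : ι → V}
    (he : LinearIndependent ℂ e) :
    ∃ φ : ι → V →ₗ[ℂ] ℂ, ∀ i j, φ i (e j) = if j = i then 1 else 0 := by
  obtain ⟨f, hf⟩ := LinearMap.exists_leftInverse_of_injective
    (Finsupp.linearCombination ℂ e) (LinearMap.ker_eq_bot.2 he)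
  refine ⟨fun i => (Finsupp.lapply i).comp f, fun i j => ?_⟩
  have := LinearMap.congr_fun hf (Finsupp.single j 1)
  simp at this
  simp [this, Finsupp.single_apply]

lemma exists_comp_linear (L : (Fin 3 → ℂ) →ₗ[ℂ] (Fin 3 → ℂ)) (q : R3) :
    ∃ q' : R3, ∀ x, eval x q' = eval (L x) q := by
  refine ⟨bind₁ (fun i => ∑ j, C (L (Pi.single j 1) i) * X j) q, fun x => ?_⟩
  rw [← MvPolynomial.aeval_eq_eval, aeval_bind₁, MvPolynomial.aeval_eq_eval]
  have : (fun i => (aeval x) (∑ j, C (L (Pi.single j 1) i) * X j : R3)) = L x := by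
    ext i
    rw [LinearMap.pi_apply_eq_sum_univ L x]
    simp only [map_sum, map_mul, aeval_X, Finset.sum_apply, Pi.smul_apply, smul_eq_mul,
      MvPolynomial.algHom_C, Algebra.algebraMap_self, RingHom.id_apply]
    refine Finset.sum_congr rfl fun j _ => ?_
    have hsingle : (Pi.single j 1 : Fin 3 → ℂ) = fun k => if j = k then 1 else 0 := by
      ext k
      simp [Pi.single_apply, eq_comm]
    rw [mul_comm, hsingle]
  rw [← this]

/-- The values of `F` span `ℂ^r`: a linear form killing all of them would give a linear relation
between the `pᵢ`. -/
lemma exists_indep_values {r : ℕ} (p : Fin r → R3) (hli : LinearIndependent ℂ p) :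
    ∃ v : Fin r → Fin 3 → ℂ, LinearIndependent ℂ fun k => evalVec p (v k) := by
  have htop : Submodule.span ℂ (Set.range (evalVec p)) = ⊤ := by
    by_contra hne
    obtain ⟨φ, hφ, hle⟩ := Submodule.exists_le_ker_of_lt_top _ (lt_top_iff_ne_top.2 hne)
    apply hφ
    have h0 : pullForm p φ = 0 := by
      apply MvPolynomial.funext
      intro x
      rw [eval_pullForm, map_zero]
      exact hle (Submodule.subset_span ⟨x, rfl⟩)
    have := Fintype.linearIndependent_iff.1 hli _ h0
    ext i
    simpa using this i
  obtain ⟨f, hf, -, hfi⟩ := Submodule.exists_fun_fin_finrank_span_eq ℂ (Set.range (evalVec p))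
  have hfr : Module.finrank ℂ (Submodule.span ℂ (Set.range (evalVec p))) = r := by
    rw [htop]; simp
  choose v hv using hf
  refine ⟨fun k => v (Fin.cast hfr.symm k), ?_⟩
  simp only [hv]
  exact hfi.comp _ (Fin.cast_injective _)

/-- Some three vectors in a common plane (encoded by a vanishing determinant) have linearly
independent images under `F`. -/
lemma exists_coplanar_indep {r : ℕ} (hr : 4 ≤ r) (p : Fin r → R3)
    (hli : LinearIndependent ℂ p) :
    ∃ u : Fin 3 → Fin 3 → ℂ, (Matrix.of u).det = 0 ∧
      LinearIndependent ℂ fun k => evalVec p (u k) := by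
  by_contra! H
  obtain ⟨v', hv'⟩ := exists_indep_values p hli
  obtain ⟨v, hv⟩ : ∃ v : Fin 4 → Fin 3 → ℂ, LinearIndependent ℂ fun k => evalVec p (v k) :=
    ⟨fun k => v' (Fin.castLE hr k), hv'.comp _ (Fin.castLE_injective hr)⟩
  obtain ⟨φ, hφ⟩ := exists_dual_family hv
  have hdet : IsUnit (Matrix.of ![v 0, v 1, v 2]).det := by
    rw [isUnit_iff_ne_zero]
    intro h0
    refine H _ h0 ?_
    have := hv.comp (Fin.castSucc : Fin 3 → Fin 4) (Fin.castSucc_injective 3)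
    convert this using 2 with k
    fin_cases k <;> rfl
  set M : Matrix (Fin 3) (Fin 3) ℂ := (Matrix.of ![v 0, v 1, v 2]).transpose with hM
  have hMdet : IsUnit M.det := by rwa [hM, Matrix.det_transpose]
  have hMc (c : Fin 3 → ℂ) : M.mulVec c = c 0 • v 0 + c 1 • v 1 + c 2 • v 2 := by
    ext i
    simp [hM, Matrix.mulVec, dotProduct, Fin.sum_univ_three, mul_comm]
  obtain ⟨P, hP⟩ := exists_comp_linear M.mulVecLin (pullForm p (φ 3))
  obtain ⟨Q, hQ⟩ := exists_comp_linear (M * Matrix.diagonal ![1, 1, 0]).mulVecLin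
    (pullForm p (φ 0))
  have hP0 : P ≠ 0 := by
    intro h
    have := hP (M⁻¹.mulVec (v 3))
    rw [h, eval_pullForm] at this
    simp [Matrix.mulVec_mulVec, Matrix.mul_nonsing_inv _ hMdet, hφ] at this
  have hdiag (c : Fin 3 → ℂ) :
      (M * Matrix.diagonal ![1, 1, 0]).mulVec c = c 0 • v 0 + c 1 • v 1 := by
    rw [← Matrix.mulVec_mulVec, hMc]
    simp [Matrix.mulVec_diagonal]
  have hQ0 : Q ≠ 0 := by
    intro h
    have := hQ ![1, 0, 0]
    rw [h, eval_pullForm, Matrix.mulVecLin_apply, hdiag] at this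
    simp [hφ] at this
  obtain ⟨c, hc⟩ : ∃ c, eval c (P * Q) ≠ 0 := by
    by_contra! h
    exact mul_ne_zero hP0 hQ0 (MvPolynomial.funext fun x => by simpa using h x)
  rw [map_mul, hP, hQ, eval_pullForm, eval_pullForm, Matrix.mulVecLin_apply,
    Matrix.mulVecLin_apply, hdiag, hMc] at hc
  obtain ⟨hx3, hy0⟩ := mul_ne_zero_iff.1 hc
  set y := c 0 • v 0 + c 1 • v 1 with hy
  set x := y + c 2 • v 2 with hx
  have d1 : (Matrix.of ![v 0, v 1, y]).det = 0 := by
    simp [Matrix.det_fin_three, hy]; ring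
  have d2 : (Matrix.of ![y, v 2, x]).det = 0 := by
    simp [Matrix.det_fin_three, hx]; ring
  -- `F y` lies in the span of `F v₀` and `F v₁`.
  have hy23 : φ 2 (evalVec p y) = 0 ∧ φ 3 (evalVec p y) = 0 := by
    obtain ⟨g, hg, i, hi⟩ := Fintype.not_linearIndependent_iff.1 (H _ d1)
    have e0 := congrArg (φ 0) hg
    have e1 := congrArg (φ 1) hg
    have e2 := congrArg (φ 2) hg
    have e3 := congrArg (φ 3) hg
    simp [Fin.sum_univ_three, hφ] at e0 e1 e2 e3
    have g2 : g 2 ≠ 0 := by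
      intro h
      simp [h] at e0 e1
      fin_cases i <;> simp_all
    exact ⟨e2.resolve_left g2, e3.resolve_left g2⟩
  -- A relation between `F y`, `F v₂` and `F x` has to be trivial, because `φ₃ (F x) ≠ 0`.
  obtain ⟨g, hg, i, hi⟩ := Fintype.not_linearIndependent_iff.1 (H _ d2)
  have e0 := congrArg (φ 0) hg
  have e2 := congrArg (φ 2) hg
  have e3 := congrArg (φ 3) hg
  simp [Fin.sum_univ_three, hφ, hy23] at e0 e2 e3
  have g2 : g 2 = 0 := e3.resolve_right hx3
  simp [g2] at e0 e2
  have g0 : g 0 = 0 := e0.resolve_right hy0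
  fin_cases i <;> simp_all

/-- A vector orthogonal to `A ≠ 0` has the form `z × A`: if `B ⬝ A = 1`, then `z = B × u` works. -/
lemma exists_cross_eq {A : Fin 3 → ℂ} (hA : A ≠ 0) :
    ∀ u : Fin 3 → ℂ, u ⬝ᵥ A = 0 → ∃ z, crossProduct z A = u := by
  obtain ⟨i, hi⟩ := Function.ne_iff.1 hA
  obtain ⟨B, hB⟩ : ∃ B : Fin 3 → ℂ, B ⬝ᵥ A = 1 := by
    refine ⟨Pi.single i (A i)⁻¹, ?_⟩
    rw [single_dotProduct]
    exact inv_mul_cancel₀ hi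
  intro u hu
  refine ⟨crossProduct B u, ?_⟩
  simp only [dotProduct, Fin.sum_univ_three] at hu hB
  ext j
  fin_cases j <;> simp [cross_apply]
  · linear_combination u 0 * hB - B 0 * hu
  · linear_combination u 1 * hB - B 1 * hu
  · linear_combination u 2 * hB - B 2 * hu

/-- Modulo `as + bt + cu`, polynomials stay linearly independent when their matrix of values at
points of the plane `as + bt + cu = 0` is invertible. -/
lemma indep_mod_line {a b c : ℂ} (q : Fin 3 → R3) (w : Fin 3 → Fin 3 → ℂ)
    (hw : ∀ k, a * w k 0 + b * w k 1 + c * w k 2 = 0)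
    (hdet : (Matrix.of fun k j => eval (w k) (q j)).det ≠ 0) :
    LinearIndependent ℂ fun j => Ideal.Quotient.mk (lineIdeal a b c) (q j) := by
  rw [Fintype.linearIndependent_iff]
  intro g hg
  have hmem : ∑ j, g j • q j ∈ lineIdeal a b c := by
    rw [← Ideal.Quotient.eq_zero_iff_mem, ← hg, map_sum]
    rfl
  obtain ⟨s, hs⟩ := Ideal.mem_span_singleton.1 hmem
  have hz : (Matrix.of fun k j => eval (w k) (q j)).mulVec g = 0 := by
    ext k
    have := congrArg (eval (w k)) hs
    simp [hw] at this
    simpa [Matrix.mulVec, dotProduct, mul_comm] using this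
  exact fun j => congrFun (Matrix.eq_zero_of_mulVec_eq_zero hdet hz) j

theorem stmt11 (n r : ℕ) (hr : 4 ≤ r) (p : Fin r → R3)
    (hhom : ∀ i, (p i).IsHomogeneous n)
    (hli : LinearIndependent ℂ p)
    -- the common zero locus in `ℂ³ ∖ {0}`, viewed in the projectivization of `ℂ³`, is finite
    (hfin : {q : Projectivization ℂ (Fin 3 → ℂ) |
        ∃ (v : Fin 3 → ℂ) (hv : v ≠ 0), q = Projectivization.mk ℂ v hv ∧
          ∀ i, MvPolynomial.eval v (p i) = 0}.Finite)
    -- the rational map to `ℙ^{r-1}` defined by the `p i` is generically finite: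
    -- some nonempty fiber is finite
    (hgf : ∃ v₀ : Fin 3 → ℂ, (fun i => MvPolynomial.eval v₀ (p i)) ≠ 0 ∧
      {q : Projectivization ℂ (Fin 3 → ℂ) |
        ∃ (v : Fin 3 → ℂ) (hv : v ≠ 0), q = Projectivization.mk ℂ v hv ∧
          ∃ lam : ℂ, lam ≠ 0 ∧
            (fun i => MvPolynomial.eval v (p i)) =
              lam • fun i => MvPolynomial.eval v₀ (p i)}.Finite) :
    -- for a generic linear form `ℓ = as+bt+cu`, the images of the `p i` in `R/⟨ℓ⟩`
    -- span a `ℂ`-vector space of dimension at least 3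
    ∃ g : MvPolynomial (Fin 3) ℂ, g ≠ 0 ∧
      ∀ a b c : ℂ, MvPolynomial.eval ![a, b, c] g ≠ 0 →
        3 ≤ Module.finrank ℂ
          (Submodule.span ℂ (Set.range fun i =>
            Ideal.Quotient.mk (lineIdeal a b c) (p i))) := by
  obtain ⟨u, hu, hind⟩ := exists_coplanar_indep hr p hli
  obtain ⟨φ, hφ⟩ := exists_dual_family hind
  obtain ⟨A, hA, hAu⟩ := Matrix.exists_mulVec_eq_zero_iff.2 hu
  choose z hz using fun k => exists_cross_eq hA (u k) (congrFun hAu k)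
  choose G hG using fun k j => exists_comp_linear (crossProduct (z k)) (pullForm p (φ j))
  have hgeval (B : Fin 3 → ℂ) : eval B (Matrix.of G).det =
      (Matrix.of fun k j => eval (crossProduct (z k) B) (pullForm p (φ j))).det := by
    rw [RingHom.map_det]
    congr 1
    ext k j
    simp [hG]
  refine ⟨(Matrix.of G).det, fun h0 => ?_, fun a b c hg => ?_⟩
  · have h1 := hgeval A
    have hone : (Matrix.of fun k j => eval (crossProduct (z k) A) (pullForm p (φ j))) = 1 := by
      ext k j
      simp [hz, eval_pullForm, hφ, Matrix.one_apply]
    rw [hone, h0] at h1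
    simp at h1
  · rw [hgeval] at hg
    have hq := indep_mod_line (a := a) (b := b) (c := c) (fun j => pullForm p (φ j))
      (fun k => crossProduct (z k) ![a, b, c])
      (fun k => by simp [cross_apply]; ring) hg
    have hcard := finrank_span_eq_card hq
    rw [Fintype.card_fin] at hcard
    refine hcard.symm.le.trans ?_
    have : Module.Finite ℂ (Submodule.span ℂ (Set.range fun i =>
        Ideal.Quotient.mk (lineIdeal a b c) (p i))) :=
      Module.Finite.span_of_finite ℂ (Set.finite_range _)
    apply Submodule.finrank_mono
    rw [Submodule.span_le]
    rintro _ ⟨j, rfl⟩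
    have himg := Submodule.mem_map_of_mem (f := (Ideal.Quotient.mkₐ ℂ (lineIdeal a b c)).toLinearMap)
      (pullForm_mem p (φ j))
    rw [Submodule.map_span, ← Set.range_comp] at himg
    exact himg
end

section
/- Let p₁, …, p_r ∈ R be ℂ-linearly independent homogeneous polynomials of degree n with r ≥ 4 generating the ideal I, such that the set of their common zeros in ℂ³ ∖ {0}, taken up to nonzero scalar multiples, is finite, and such that the rational map to ℙ^{r−1} they define is generically finite in the following sense: there exists v₀ ∈ ℂ³ with (p₁(v₀),…,p_r(v₀)) ≠ 0 such that the set of points of the projectivization of ℂ³ represented by vectors v with (p₁(v),…,p_r(v)) = λ·(p₁(v₀),…,p_r(v₀)) for some λ ∈ ℂ ∖ {0} is finite. Let D be the eventual constant value of dim_ℂ (R/I)_k for all sufficiently large k. Then for every integer k ≥ 2n − 3 with k ≥ 0, dim_ℂ (R/sat(I))_k = D. -/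
/-!
The saturated ideal `J = sat(I)` is studied by cutting with a general line `l = 0`, where
`l = u - a s - b t`. Since `J` is saturated, `⟨s,t,u⟩` is not among the finitely many associated
primes of `R/J`, so `l` can be chosen to be a nonzerodivisor on `R/J` and not to vanish at any base
point (`exists_general_line`). Multiplication by `l` then embeds `(R/J)_k` into `(R/J)_{k+1}`, and
it suffices to show that this is onto for `k ≥ 2n - 3`, that is, that the restrictions of `J` to the
line contain all binary forms of degree `≥ 2n - 2`. The limit value of `dim (R/J)_k` is `D` because
`I` and `J` agree in large degrees (`exists_satIdeal_le`).

On the line, two members `f`, `g` of the linear system restrict to coprime forms `F`, `G` of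
degree `n` (`exists_coprime_pair`), and `ℂ[x,y]/(F,G)` is a Gorenstein algebra with
one-dimensional socle in its top degree `2n - 2`. The `p i` span a space of dimension `> 2`, so some
`p i` is no combination of `f` and `g`. Either it restricts to a form `H` outside `(F,G)`, or its
difference with a combination of `f` and `g` is divisible by `l`, and division by the largest
possible power of `l` gives an element of `J` of degree `d < n` whose restriction `H` is nonzero, so
again outside `(F,G)` (`exists_restr_ne_zero`). A nonzero ideal
of the Gorenstein algebra contains the socle, so `(F,G,H)` contains every form of degree
`≥ 2n - 2` (`exists_cofactors`). Binary forms are treated as univariate polynomials with a degree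
bound, and the socle is detected by the top coefficient of the cofactor of `G` reduced modulo `F`
(`exists_socle_multiple`).
-/

open MvPolynomial

/-- `quotDim I k` is the dimension of the degree-`k` graded piece of `R/I`. -/
noncomputable def quotDim (I : Ideal R3) (k : ℕ) : ℕ :=
  Module.finrank ℂ
    ((homogeneousSubmodule (Fin 3) ℂ k).map (Ideal.Quotient.mkₐ ℂ I).toLinearMap)

/-- The saturation of `J` with respect to the irrelevant ideal `⟨s,t,u⟩`, as an ideal. -/
noncomputable def satIdeal (J : Ideal R3) : Ideal R3 :=
  Ideal.span {f | ∃ k : ℕ, ∀ g ∈ (Ideal.span {X 0, X 1, X 2} : Ideal R3) ^ k, g * f ∈ J}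

/-! ### The saturation -/

lemma irrelevant_eq : (Ideal.span {X 0, X 1, X 2} : Ideal R3) = idealOfVars (Fin 3) ℂ := by
  unfold idealOfVars
  congr 1
  ext f
  simp only [Set.mem_insert_iff, Set.mem_singleton_iff, Set.mem_range, Fin.exists_fin_succ,
    IsEmpty.exists_iff, or_false]
  simp [eq_comm]

/-- The set generating `satIdeal J` is already an ideal. -/
lemma mem_satIdeal {J : Ideal R3} {f : R3} :
    f ∈ satIdeal J ↔ ∃ k : ℕ, ∀ g ∈ idealOfVars (Fin 3) ℂ ^ k, g * f ∈ J := by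
  unfold satIdeal
  rw [irrelevant_eq]
  constructor
  · intro hf
    induction hf using Submodule.span_induction with
    | mem x h => exact h
    | zero => exact ⟨0, by simp⟩
    | add x y _ _ hx hy =>
      obtain ⟨k, hk⟩ := hx
      obtain ⟨l, hl⟩ := hy
      refine ⟨k + l, fun g hg => ?_⟩
      rw [mul_add]
      exact J.add_mem (hk g (Ideal.pow_le_pow_right (by omega) hg))
        (hl g (Ideal.pow_le_pow_right (by omega) hg))
    | smul a x _ hx =>
      obtain ⟨k, hk⟩ := hx
      refine ⟨k, fun g hg => ?_⟩
      rw [smul_eq_mul, mul_left_comm]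
      exact J.mul_mem_left _ (hk g hg)
  · intro h
    exact Ideal.subset_span h

lemma le_satIdeal (J : Ideal R3) : J ≤ satIdeal J := fun _ hf =>
  mem_satIdeal.2 ⟨0, fun _ _ => J.mul_mem_left _ hf⟩

lemma mem_satIdeal_of_X_mul {J : Ideal R3} {f : R3} (h : ∀ i, X i * f ∈ satIdeal J) :
    f ∈ satIdeal J := by
  choose k hk using fun i => mem_satIdeal.1 (h i)
  refine mem_satIdeal.2 ⟨(∑ i, k i) + 1, fun g hg => ?_⟩
  rw [pow_succ] at hg
  induction hg using Submodule.mul_induction_on' with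
  | mem_mul_mem a ha b hb =>
    unfold idealOfVars at hb
    induction hb using Submodule.span_induction with
    | mem x hx =>
      obtain ⟨i, rfl⟩ := hx
      rw [mul_assoc]
      exact hk i a (Ideal.pow_le_pow_right
        (Finset.single_le_sum (fun _ _ => Nat.zero_le _) (Finset.mem_univ i)) ha)
    | zero => simp
    | add x y _ _ hx hy => rw [mul_add, add_mul]; exact J.add_mem hx hy
    | smul c x _ hx =>
      rw [smul_eq_mul, mul_left_comm, mul_assoc]; exact J.mul_mem_left _ hx
  | add x _ y _ hx hy => rw [add_mul]; exact J.add_mem hx hy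

/-- A homogeneous ideal agrees with its saturation in all large degrees. -/
lemma exists_satIdeal_le {J : Ideal R3}
    (hJ : ∀ f ∈ J, ∀ k, homogeneousComponent k f ∈ J) :
    ∃ M, ∀ k, M ≤ k → ∀ f ∈ satIdeal J, f.IsHomogeneous k → f ∈ J := by
  have key : ∀ g ∈ satIdeal J, ∃ M, ∀ k, M ≤ k → ∀ a,
      homogeneousComponent k (a * g) ∈ J := by
    intro g hg
    obtain ⟨K, hK⟩ := mem_satIdeal.1 hg
    refine ⟨K + g.totalDegree + 1, fun k hk a => ?_⟩
    -- the part of `a` of degree `< K` does not contribute to degree `k`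
    set low := ∑ j ∈ Finset.range K, homogeneousComponent j a with hlow
    have hhigh : a - low ∈ idealOfVars (Fin 3) ℂ ^ K := by
      rw [mem_pow_idealOfVars_iff']
      intro x hx
      simp [hlow, coeff_sum, coeff_homogeneousComponent, hx]
    have hdeg : (low * g).totalDegree < k := by
      have h1 : low.totalDegree ≤ K := by
        refine totalDegree_finsetSum_le fun j hj => ?_
        exact (homogeneousComponent_isHomogeneous j a).totalDegree_le.trans
          (Finset.mem_range.1 hj).le
      have := totalDegree_mul low g
      omega
    have : a * g = (a - low) * g + low * g := by ring
    rw [this, map_add, homogeneousComponent_eq_zero _ _ hdeg, add_zero]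
    exact hJ _ (hK _ hhigh) k
  obtain ⟨S, hS⟩ := (isNoetherianRing_iff_ideal_fg R3).1 inferInstance (satIdeal J)
  choose! M hM using key
  refine ⟨∑ g ∈ S, M g, fun k hk f hf hfk => ?_⟩
  rw [← hS] at hf
  obtain ⟨a, -, rfl⟩ := Submodule.mem_span_finset.1 hf
  rw [← homogeneousComponent_eq_self hfk, map_sum]
  refine J.sum_mem fun g hg => ?_
  rw [smul_eq_mul]
  refine hM g (hS ▸ Ideal.subset_span hg) k (le_trans ?_ hk) _
  exact Finset.single_le_sum (fun _ _ => Nat.zero_le _) hg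

/-! ### Hilbert functions -/

lemma quotDim_eq (J : Ideal R3) (k : ℕ) : quotDim J k =
    Module.finrank ℂ (homogeneousSubmodule (Fin 3) ℂ k ⧸
      LinearMap.ker ((Ideal.Quotient.mkₐ ℂ J).toLinearMap.domRestrict
        (homogeneousSubmodule (Fin 3) ℂ k))) := by
  unfold quotDim
  rw [(LinearMap.quotKerEquivRange _).finrank_eq, LinearMap.range_domRestrict]

lemma quotDim_congr {I J : Ideal R3} {k : ℕ}
    (h : ∀ f, f.IsHomogeneous k → (f ∈ I ↔ f ∈ J)) : quotDim I k = quotDim J k := by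
  rw [quotDim_eq, quotDim_eq]
  have : LinearMap.ker ((Ideal.Quotient.mkₐ ℂ I).toLinearMap.domRestrict
        (homogeneousSubmodule (Fin 3) ℂ k)) = LinearMap.ker
        ((Ideal.Quotient.mkₐ ℂ J).toLinearMap.domRestrict
        (homogeneousSubmodule (Fin 3) ℂ k)) := by
    ext ⟨f, hf⟩
    simpa [Ideal.Quotient.eq_zero_iff_mem] using h f hf
  rw [this]

/-- If a linear form `l` is a nonzerodivisor modulo `J` and every form of degree `k + 1` is a
multiple of `l` modulo `J`, then multiplication by `l` identifies `(R/J)_k` with `(R/J)_{k+1}`. -/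
lemma quotDim_succ {J : Ideal R3} {l : R3} (hl : l.IsHomogeneous 1)
    (hreg : ∀ f, l * f ∈ J → f ∈ J) {k : ℕ}
    (hsurj : ∀ f : R3, f.IsHomogeneous (k + 1) →
      ∃ q : R3, q.IsHomogeneous k ∧ f - l * q ∈ J) :
    quotDim J k = quotDim J (k + 1) := by
  rw [quotDim_eq]
  have hker : LinearMap.ker ((Ideal.Quotient.mkₐ ℂ J).toLinearMap.domRestrict
        (homogeneousSubmodule (Fin 3) ℂ k)) = LinearMap.ker
        (((Ideal.Quotient.mkₐ ℂ J).toLinearMap ∘ₗ LinearMap.mulLeft ℂ l).domRestrict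
        (homogeneousSubmodule (Fin 3) ℂ k)) := by
    ext ⟨f, hf⟩
    simp only [LinearMap.mem_ker, LinearMap.domRestrict_apply, LinearMap.comp_apply,
      LinearMap.mulLeft_apply, AlgHom.toLinearMap_apply, Ideal.Quotient.mkₐ_eq_mk,
      Ideal.Quotient.eq_zero_iff_mem]
    exact ⟨fun h => J.mul_mem_left _ h, hreg f⟩
  have hmap : (homogeneousSubmodule (Fin 3) ℂ k).map
      ((Ideal.Quotient.mkₐ ℂ J).toLinearMap ∘ₗ LinearMap.mulLeft ℂ l) =
      (homogeneousSubmodule (Fin 3) ℂ (k + 1)).map (Ideal.Quotient.mkₐ ℂ J).toLinearMap := by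
    ext y
    simp only [Submodule.mem_map, mem_homogeneousSubmodule, LinearMap.comp_apply,
      LinearMap.mulLeft_apply, AlgHom.toLinearMap_apply, Ideal.Quotient.mkₐ_eq_mk]
    constructor
    · rintro ⟨q, hq, rfl⟩
      exact ⟨l * q, by simpa [add_comm] using hl.mul hq, rfl⟩
    · rintro ⟨f, hf, rfl⟩
      obtain ⟨q, hq, h⟩ := hsurj f hf
      exact ⟨q, hq, (Ideal.Quotient.eq.2 h).symm⟩
  rw [hker, (LinearMap.quotKerEquivRange _).finrank_eq, LinearMap.range_domRestrict, hmap]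
  rfl

/-! ### Binary forms, dehomogenized -/

/-- The cofactor of `F` in `Q = A F + B G` satisfies the same degree bound as that of `G`. -/
lemma degree_cofactor_lt {F G A B Q : Polynomial ℂ} {n k : ℕ} (hF : F.natDegree = n)
    (hF0 : F ≠ 0) (hG : G.natDegree ≤ n) (hQ : Q.natDegree ≤ k)
    (hB : B.degree < ((k + 1 - n : ℕ) : WithBot ℕ)) (h : Q = A * F + B * G) :
    A.degree < ((k + 1 - n : ℕ) : WithBot ℕ) := by
  have hBG : (B * G).natDegree ≤ k := by
    rcases eq_or_ne B 0 with rfl | hB0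
    · simp
    have h1 := Polynomial.natDegree_mul_le (p := B) (q := G)
    have h2 := (Polynomial.natDegree_lt_iff_degree_lt hB0).2 hB
    omega
  rcases eq_or_ne A 0 with rfl | hA0
  · simp [bot_lt_iff_ne_bot]
  have hAF : A * F = Q - B * G := by rw [h]; ring
  have h3 : (A * F).natDegree ≤ k := by
    rw [hAF]
    exact (Polynomial.natDegree_sub_le _ _).trans (max_le hQ hBG)
  rw [Polynomial.natDegree_mul hA0 hF0] at h3
  rw [← Polynomial.natDegree_lt_iff_degree_lt hA0]
  omega

lemma exists_reduced_cofactors {F G : Polynomial ℂ} {n : ℕ} (hF : F.natDegree = n)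
    (hF0 : F ≠ 0) (hcop : IsCoprime F G) (Q : Polynomial ℂ) :
    ∃ A B : Polynomial ℂ, Q = A * F + B * G ∧ B.degree < (n : WithBot ℕ) := by
  obtain ⟨a, b, hab⟩ := hcop
  refine ⟨Q * a + (Q * b / F) * G, (Q * b) % F, ?_, ?_⟩
  · have h := EuclideanDomain.div_add_mod (Q * b) F
    linear_combination (-Q) * hab + (-G) * h
  · have := EuclideanDomain.mod_lt (Q * b) hF0
    rw [← hF, ← Polynomial.degree_eq_natDegree hF0]
    exact this

lemma degree_lt_pred {B : Polynomial ℂ} {n : ℕ} (hB : B.degree < (n : WithBot ℕ))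
    (h0 : B.coeff (n - 1) = 0) : B.degree < ((n - 1 : ℕ) : WithBot ℕ) := by
  rw [Polynomial.degree_lt_iff_coeff_zero] at hB ⊢
  intro m hm
  rcases eq_or_lt_of_le hm with rfl | hlt
  · exact h0
  · exact hB m (by omega)

/-- In `ℂ[x,y]/(F,G)`, with `F`, `G` coprime forms of degree `n`, a nonzero class `H` of degree
`d ≤ n` has a multiple `x^j y^i H` that spans the socle, which sits in degree `2n - 2`. The socle
coordinate is the top coefficient `B.coeff (n - 1)` of the reduced cofactor of `G`. -/
lemma exists_socle_multiple {F G H : Polynomial ℂ} {n d k : ℕ} (hF : F.natDegree = n)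
    (hF0 : F ≠ 0) (hG : G.natDegree ≤ n) (hcop : IsCoprime F G)
    (hH : H.natDegree ≤ d) (hd : d ≤ n) (hlt : d < n → H ≠ 0)
    (heq : d = n → ∀ κ μ : ℂ, H ≠ Polynomial.C κ * G + Polynomial.C μ * F)
    (hk : k + 2 = 2 * n) :
    ∃ (j : ℕ) (A B : Polynomial ℂ), j + d ≤ k ∧ Polynomial.X ^ j * H = A * F + B * G ∧
      B.degree < (n : WithBot ℕ) ∧ B.coeff (n - 1) ≠ 0 := by
  by_contra! hcon
  obtain ⟨A, K, hAK, hK⟩ := exists_reduced_cofactors hF hF0 hcop H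
  have step : ∀ j, j + d ≤ k + 1 → (Polynomial.X ^ j * K).degree < (n : WithBot ℕ) := by
    intro j
    induction j with
    | zero => intro _; simpa using hK
    | succ j ih =>
      intro hj
      have h1 := ih (by omega)
      have h2 := degree_lt_pred h1
        (hcon j (Polynomial.X ^ j * A) (Polynomial.X ^ j * K) (by omega) (by rw [hAK]; ring) h1)
      rcases eq_or_ne K 0 with rfl | hK0
      · simp [bot_lt_iff_ne_bot]
      have hne : ∀ i, (Polynomial.X ^ i * K : Polynomial ℂ) ≠ 0 := fun i =>
        mul_ne_zero (pow_ne_zero _ Polynomial.X_ne_zero) hK0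
      rw [← Polynomial.natDegree_lt_iff_degree_lt (hne _)] at h2 ⊢
      rw [Polynomial.natDegree_X_pow_mul _ hK0] at h2 ⊢
      omega
  have hKz : ∀ m, 0 < m ∨ d < n → K.coeff m = 0 := by
    intro m hm
    have h1 := (Polynomial.degree_lt_iff_coeff_zero _ _).1 (step (k + 1 - d) (by omega))
      (m + (k + 1 - d)) (by omega)
    rwa [Polynomial.coeff_X_pow_mul] at h1
  rcases hd.lt_or_eq with hdn | hdn
  · have hK0 : K = 0 := by ext m; simp [hKz m (Or.inr hdn)]
    subst hK0
    have hA0 : A ≠ 0 := by rintro rfl; exact hlt hdn (by simpa using hAK)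
    have : H.natDegree = A.natDegree + F.natDegree := by
      rw [hAK]; simp [Polynomial.natDegree_mul hA0 hF0]
    omega
  · have hKC : K = Polynomial.C (K.coeff 0) := by
      ext m
      rcases Nat.eq_zero_or_pos m with rfl | hm
      · simp
      · rw [hKz m (Or.inl hm), Polynomial.coeff_C_of_ne_zero hm.ne']
    have hAC : A = Polynomial.C (A.coeff 0) := by
      rcases eq_or_ne A 0 with rfl | hA0
      · simp
      refine Polynomial.eq_C_of_natDegree_eq_zero ?_
      have hAF : A * F = H - K * G := by rw [hAK]; ring
      have h3 : (A * F).natDegree ≤ n := by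
        rw [hAF, hKC]
        refine (Polynomial.natDegree_sub_le _ _).trans (max_le (hdn ▸ hH) ?_)
        exact (Polynomial.natDegree_C_mul_le _ _).trans hG
      rw [Polynomial.natDegree_mul hA0 hF0] at h3
      omega
    refine heq hdn (K.coeff 0) (A.coeff 0) ?_
    rw [← hKC, ← hAC, hAK]; ring

/-- The ideal generated by two coprime binary forms `F`, `G` of degree `n` and a further form `H`
of degree `d ≤ n` outside `(F,G)` contains everything of degree `k ≥ 2n - 2`. -/
lemma exists_cofactors {F G H : Polynomial ℂ} {n d k : ℕ} (hF : F.natDegree = n)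
    (hF0 : F ≠ 0) (hG : G.natDegree ≤ n) (hcop : IsCoprime F G)
    (hH : H.natDegree ≤ d) (hd : d ≤ n) (hlt : d < n → H ≠ 0)
    (heq : d = n → ∀ κ μ : ℂ, H ≠ Polynomial.C κ * G + Polynomial.C μ * F)
    (hk : 2 * n ≤ k + 2) {Q : Polynomial ℂ} (hQ : Q.natDegree ≤ k) :
    ∃ A B E : Polynomial ℂ, Q = A * F + B * G + E * H ∧
      A.degree < ((k + 1 - n : ℕ) : WithBot ℕ) ∧ B.degree < ((k + 1 - n : ℕ) : WithBot ℕ) ∧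
      E.degree < ((k + 1 - d : ℕ) : WithBot ℕ) := by
  obtain ⟨A, B, hAB, hB⟩ := exists_reduced_cofactors hF hF0 hcop Q
  rcases hk.lt_or_eq with hk' | hk'
  · have hB' : B.degree < ((k + 1 - n : ℕ) : WithBot ℕ) :=
      hB.trans_le (by exact_mod_cast (by omega : n ≤ k + 1 - n))
    exact ⟨A, B, 0, by simpa using hAB, degree_cofactor_lt hF hF0 hG hQ hB' hAB, hB',
      by simp [bot_lt_iff_ne_bot]⟩
  · obtain ⟨j, A', B', hj, hAB', hB', hc⟩ :=
      exists_socle_multiple hF hF0 hG hcop hH hd hlt heq hk'.symm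
    set c := B.coeff (n - 1) / B'.coeff (n - 1) with hcdef
    have hE : (Polynomial.C c * Polynomial.X ^ j).natDegree ≤ j :=
      Polynomial.natDegree_C_mul_X_pow_le _ _
    have hBB : (B - Polynomial.C c * B').degree < ((k + 1 - n : ℕ) : WithBot ℕ) := by
      have : k + 1 - n = n - 1 := by omega
      rw [this]
      refine degree_lt_pred ((Polynomial.degree_sub_le _ _).trans_lt (max_lt hB ?_)) ?_
      · rw [← Polynomial.smul_eq_C_mul]
        exact (Polynomial.degree_smul_le _ _).trans_lt hB'
      · rw [Polynomial.coeff_sub, Polynomial.coeff_C_mul, hcdef, div_mul_cancel₀ _ hc, sub_self]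
    have hdec : Q - Polynomial.C c * Polynomial.X ^ j * H =
        (A - Polynomial.C c * A') * F + (B - Polynomial.C c * B') * G := by
      rw [mul_assoc, hAB', hAB]; ring
    refine ⟨A - Polynomial.C c * A', B - Polynomial.C c * B', Polynomial.C c * Polynomial.X ^ j,
      by rw [← hdec]; ring, degree_cofactor_lt hF hF0 hG ?_ hBB hdec, hBB, ?_⟩
    · refine (Polynomial.natDegree_sub_le _ _).trans (max_le hQ ?_)
      exact Polynomial.natDegree_mul_le.trans (by omega)
    · refine Polynomial.degree_lt_iff_coeff_zero _ _ |>.2 fun m hm => ?_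
      exact Polynomial.coeff_eq_zero_of_natDegree_lt (by omega)

/-! ### Restriction to a line -/

/-- The linear form `u - a s - b t`. -/
noncomputable def lineForm (a b : ℂ) : R3 := X 2 - C a * X 0 - C b * X 1

/-- Restriction of forms to the line `u = a s + b t`, dehomogenized by `s = X`, `t = 1`. -/
noncomputable def restr (a b : ℂ) : R3 →ₐ[ℂ] Polynomial ℂ :=
  aeval ![Polynomial.X, 1, Polynomial.C a * Polynomial.X + Polynomial.C b]

lemma lineForm_isHomogeneous (a b : ℂ) : (lineForm a b).IsHomogeneous 1 :=
  ((isHomogeneous_X _ _).sub (isHomogeneous_C_mul_X _ _)).sub (isHomogeneous_C_mul_X _ _)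

lemma restr_C (a b c : ℂ) : restr a b (C c) = Polynomial.C c := by
  simp [restr]

lemma eval_restr (a b z : ℂ) (f : R3) :
    (restr a b f).eval z = eval ![z, 1, a * z + b] f := by
  have : (Polynomial.aeval z).comp (restr a b) = aeval ![z, 1, a * z + b] := by
    apply MvPolynomial.algHom_ext
    intro i
    fin_cases i <;> simp [restr]
  have h := DFunLike.congr_fun this f
  simpa [Polynomial.aeval_def, aeval_eq_eval] using h

lemma natDegree_restr_le (a b : ℂ) {f : R3} {k : ℕ} (hf : f.IsHomogeneous k) :
    (restr a b f).natDegree ≤ k := by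
  have := aeval_natDegree_le (m := k) f hf.totalDegree_le
    ![Polynomial.X, 1, Polynomial.C a * Polynomial.X + Polynomial.C b] (n := 1) (by
      intro i
      fin_cases i
      · simp
      · simp
      · exact Polynomial.natDegree_linear_le)
  simpa [restr] using this

lemma sum_eq_of_mem_support {f : R3} {k : ℕ} (hf : f.IsHomogeneous k) {m : Fin 3 →₀ ℕ}
    (hm : m ∈ f.support) : ∑ i, m i = k :=
  (Finsupp.degree_eq_sum m).symm.trans (hf.degree_eq_sum_deg_support hm).symm

/-- The coefficient of degree `k` is the value at the point at infinity `t = 0` of the line. -/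
lemma coeff_restr (a b : ℂ) {f : R3} {k : ℕ} (hf : f.IsHomogeneous k) :
    (restr a b f).coeff k = eval ![1, 0, a] f := by
  rw [restr, aeval_def, eval₂_eq', eval_eq', Polynomial.finsetSum_coeff]
  refine Finset.sum_congr rfl fun m hm => ?_
  have hdeg : m 0 + m 1 + m 2 = k := by
    rw [← sum_eq_of_mem_support hf hm, Fin.sum_univ_three]
  have hlin : (Polynomial.C a * Polynomial.X + Polynomial.C b).natDegree ≤ 1 :=
    Polynomial.natDegree_linear_le
  have hpow := Polynomial.coeff_pow_of_natDegree_le (m := m 2) hlin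
  have hpd := Polynomial.natDegree_pow_le_of_le (m 2) hlin
  rw [mul_one] at hpow
  simp only [Polynomial.algebraMap_eq, Polynomial.coeff_C_mul, Fin.prod_univ_three]
  congr 1
  simp only [Matrix.cons_val_zero, Matrix.cons_val_one, Matrix.cons_val, one_pow, mul_one, one_mul]
  rcases Nat.eq_zero_or_pos (m 1) with h1 | h1
  · have : k = m 2 + m 0 := by omega
    rw [this, Polynomial.coeff_X_pow_mul, hpow, h1]
    simp
  · rw [zero_pow h1.ne', zero_mul]
    refine Polynomial.coeff_eq_zero_of_natDegree_lt ?_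
    refine Polynomial.natDegree_mul_le.trans_lt ?_
    rw [Polynomial.natDegree_X_pow]
    omega

/-- Cofactors on the line lift to the plane, with the degrees of forms. -/
lemma exists_lift (a b : ℂ) {A : Polynomial ℂ} {k n : ℕ}
    (hA : A.degree < ((k + 1 - n : ℕ) : WithBot ℕ)) :
    ∃ P : R3, restr a b P = A ∧ ∀ f : R3, f.IsHomogeneous n → (P * f).IsHomogeneous k := by
  refine ⟨∑ j ∈ Finset.range (k + 1 - n), C (A.coeff j) * X 0 ^ j * X 1 ^ (k - n - j), ?_, ?_⟩
  · simp only [restr, map_sum, map_mul, map_pow, aeval_X, aeval_C, Polynomial.algebraMap_eq]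
    simp only [Matrix.cons_val_zero, Matrix.cons_val_one, one_pow, mul_one]
    rw [Polynomial.degree_lt_iff_coeff_zero] at hA
    ext m
    simp only [Polynomial.finsetSum_coeff, Polynomial.coeff_C_mul, Polynomial.coeff_X_pow]
    simp only [mul_ite, mul_one, mul_zero, Finset.sum_ite_eq, Finset.mem_range]
    split_ifs with h
    · rfl
    · exact (hA m (by omega)).symm
  · intro f hf
    rw [Finset.sum_mul]
    refine IsHomogeneous.sum _ _ _ fun j hj => ?_
    have hj' := Finset.mem_range.1 hj
    have := (((isHomogeneous_C (Fin 3) (A.coeff j)).mul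
      (isHomogeneous_X_pow (R := ℂ) (0 : Fin 3) j)).mul
      (isHomogeneous_X_pow (R := ℂ) (1 : Fin 3) (k - n - j))).mul hf
    convert this using 1
    omega

lemma eval_smul_of_isHomogeneous {f : R3} {k : ℕ} (hf : f.IsHomogeneous k) (c : ℂ)
    (v : Fin 3 → ℂ) : eval (c • v) f = c ^ k * eval v f := by
  rw [eval_eq', eval_eq', Finset.mul_sum]
  refine Finset.sum_congr rfl fun m hm => ?_
  have hdeg := sum_eq_of_mem_support hf hm
  simp only [Pi.smul_apply, smul_eq_mul, mul_pow, Finset.prod_mul_distrib,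
    Finset.prod_pow_eq_pow_sum, hdeg]
  ring

lemma lineForm_dvd_of_restr_eq_zero {a b : ℂ} {f : R3} {k : ℕ} (hf : f.IsHomogeneous k)
    (h : restr a b f = 0) : lineForm a b ∣ f := by
  -- `ψ` substitutes `u = a s + b t`; it is the identity modulo `lineForm a b`
  let ψ : R3 →ₐ[ℂ] R3 := aeval ![X 0, X 1, C a * X 0 + C b * X 1]
  have hψ : (Ideal.Quotient.mkₐ ℂ (Ideal.span {lineForm a b})).comp ψ =
      Ideal.Quotient.mkₐ ℂ (Ideal.span {lineForm a b}) := by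
    apply MvPolynomial.algHom_ext
    intro i
    fin_cases i
    · simp [ψ]
    · simp [ψ]
    · simp only [AlgHom.comp_apply, ψ, aeval_X, Ideal.Quotient.mkₐ_eq_mk]
      rw [eq_comm, Ideal.Quotient.eq, Ideal.mem_span_singleton]
      refine dvd_of_eq ?_
      simp [lineForm]
      ring
  have hψf : ψ f = 0 := by
    have hX : (X 1 : R3) ≠ 0 := X_ne_zero 1
    refine (mul_eq_zero.1 (?_ : X 1 * ψ f = 0)).resolve_left hX
    refine MvPolynomial.funext fun v => ?_
    rw [map_mul, eval_X, map_zero]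
    rcases eq_or_ne (v 1) 0 with h1 | h1
    · simp [h1]
    refine mul_eq_zero_of_right _ ?_
    have e1 : eval v (ψ f) = eval ![v 0, v 1, a * v 0 + b * v 1] f := by
      have : (aeval v).comp ψ = aeval ![v 0, v 1, a * v 0 + b * v 1] := by
        apply MvPolynomial.algHom_ext
        intro i
        fin_cases i <;> simp [ψ]
      simpa [aeval_eq_eval] using DFunLike.congr_fun this f
    have e2 : (![v 0, v 1, a * v 0 + b * v 1] : Fin 3 → ℂ) =
        v 1 • ![v 0 / v 1, 1, a * (v 0 / v 1) + b] := by
      ext i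
      fin_cases i
      · simp; field_simp
      · simp
      · simp; field_simp
    rw [e1, e2, eval_smul_of_isHomogeneous hf, ← eval_restr, h]
    simp
  have := DFunLike.congr_fun hψ f
  rw [AlgHom.comp_apply, hψf, map_zero, Ideal.Quotient.mkₐ_eq_mk, eq_comm,
    Ideal.Quotient.eq_zero_iff_mem, Ideal.mem_span_singleton] at this
  exact this

/-- A form of degree `k + 1` vanishing on the line is the line's equation times a form. -/
lemma exists_eq_lineForm_mul {a b : ℂ} {f : R3} {k : ℕ} (hf : f.IsHomogeneous (k + 1))
    (h : restr a b f = 0) : ∃ q : R3, q.IsHomogeneous k ∧ f = lineForm a b * q := by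
  obtain ⟨q, rfl⟩ := lineForm_dvd_of_restr_eq_zero hf h
  refine ⟨homogeneousComponent k q, homogeneousComponent_isHomogeneous k q, ?_⟩
  let _ := MvPolynomial.gradedAlgebra (σ := Fin 3) (R := ℂ)
  have h1 := DirectSum.coe_decompose_mul_add_of_left_mem (homogeneousSubmodule (Fin 3) ℂ)
    (i := 1) (j := k) (b := q) (lineForm_isHomogeneous a b)
  have h2 : ∀ (m : ℕ) (g : R3), (DirectSum.decompose (homogeneousSubmodule (Fin 3) ℂ) g m : R3) =
      homogeneousComponent m g := fun m g => decomposition.decompose'_apply g m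
  rw [h2, h2, add_comm 1 k, homogeneousComponent_eq_self hf] at h1
  exact h1

/-! ### General position -/

lemma exists_avoiding {ι E : Type*} [Finite ι] [AddCommGroup E] [Module ℂ E]
    (W : ι → Subspace ℂ E) (hW : ∀ i, W i ≠ ⊤) : ∃ c, ∀ i, c ∉ W i := by
  by_contra! h
  obtain ⟨i, hi⟩ := Subspace.exists_eq_top_of_iUnion_eq_univ (p := W)
    (Set.eq_univ_of_forall fun c => Set.mem_iUnion.2 (h c))
  exact hW i hi

/-- The linear functional `c ↦ ∑ i, c i * w i`. -/
noncomputable def pairing {ι : Type*} [Fintype ι] (w : ι → ℂ) : (ι → ℂ) →ₗ[ℂ] ℂ :=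
  Fintype.linearCombination ℂ w

lemma pairing_apply {ι : Type*} [Fintype ι] (w c : ι → ℂ) : pairing w c = ∑ i, c i * w i := by
  simp [pairing, Fintype.linearCombination_apply]

lemma ker_pairing_ne_top {ι : Type*} [Fintype ι] {w : ι → ℂ} (hw : w ≠ 0) :
    LinearMap.ker (pairing w) ≠ ⊤ := by
  classical
  obtain ⟨i, hi⟩ := Function.ne_iff.1 hw
  intro h
  have : Pi.single i 1 ∈ LinearMap.ker (pairing w) := h ▸ Submodule.mem_top
  simp [pairing_apply, Pi.single_apply] at this
  exact hi this

/-- Some line `u = a s + b t` misses the base locus and all associated points of the saturated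
ideal. The linear forms to be avoided fill finitely many proper subspaces: those with zero
`u`-coefficient, those in a given associated prime, and those through a given base point. -/
lemma exists_general_line {r : ℕ} {p : Fin r → R3}
    (hfin : {q : Projectivization ℂ (Fin 3 → ℂ) |
        ∃ (v : Fin 3 → ℂ) (hv : v ≠ 0), q = Projectivization.mk ℂ v hv ∧
          ∀ i, MvPolynomial.eval v (p i) = 0}.Finite) (I : Ideal R3) :
    ∃ a b : ℂ, (∀ f, lineForm a b * f ∈ satIdeal I → f ∈ satIdeal I) ∧
      ∀ v : Fin 3 → ℂ, v ≠ 0 → v 2 = a * v 0 + b * v 1 → ∃ i, eval v (p i) ≠ 0 := by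
  set Z := {q : Projectivization ℂ (Fin 3 → ℂ) |
        ∃ (v : Fin 3 → ℂ) (hv : v ≠ 0), q = Projectivization.mk ℂ v hv ∧
          ∀ i, MvPolynomial.eval v (p i) = 0} with hZ
  have : Finite Z := hfin
  have : Finite (associatedPrimes R3 (R3 ⧸ satIdeal I)) := associatedPrimes.finite _ _
  let L : (Fin 3 → ℂ) →ₗ[ℂ] R3 := Fintype.linearCombination ℂ (X : Fin 3 → R3)
  have hL : ∀ c, L c = ∑ i, C (c i) * X i := fun c => by
    simp [L, Fintype.linearCombination_apply, smul_eq_C_mul]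
  let W : Unit ⊕ associatedPrimes R3 (R3 ⧸ satIdeal I) ⊕ Z → Subspace ℂ (Fin 3 → ℂ) :=
    Sum.elim (fun _ => LinearMap.ker (LinearMap.proj 2))
      (Sum.elim (fun P => (P.1.restrictScalars ℂ).comap L)
        (fun q => LinearMap.ker (pairing q.1.rep)))
  obtain ⟨c, hc⟩ := exists_avoiding W (by
    rintro (_ | P | q) h
    · have : (Pi.single 2 1 : Fin 3 → ℂ) ∈ W (Sum.inl ()) := h ▸ Submodule.mem_top
      simp [W] at this
    · obtain ⟨P, hP⟩ := P
      rw [AssociatedPrimes.mem_iff, isAssociatedPrime_iff] at hP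
      obtain ⟨hprime, x, hx⟩ := hP
      obtain ⟨f, rfl⟩ := Ideal.Quotient.mk_surjective x
      have hX : ∀ i, (X i : R3) ∈ P := by
        intro i
        have : (Pi.single i 1 : Fin 3 → ℂ) ∈ (P.restrictScalars ℂ).comap L :=
          (show (P.restrictScalars ℂ).comap L = ⊤ from h) ▸ Submodule.mem_top
        simpa [hL, Pi.single_apply, apply_ite C, ite_mul] using this
      have hmem : ∀ g, g ∈ P ↔ g * f ∈ satIdeal I := by
        intro g
        rw [hx, Submodule.mem_colon_singleton, Submodule.mem_bot, ← Ideal.Quotient.eq_zero_iff_mem,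
          map_mul]
        rfl
      have hf := mem_satIdeal_of_X_mul fun i => (hmem _).1 (hX i)
      exact hprime.ne_top ((Ideal.eq_top_iff_one _).2 ((hmem 1).2 (by simpa using hf)))
    · exact ker_pairing_ne_top q.1.rep_nonzero h)
  have hc2 : c 2 ≠ 0 := fun h => hc (Sum.inl ()) (by simpa [W] using h)
  have hline : C (c 2) * lineForm (-c 0 / c 2) (-c 1 / c 2) = L c := by
    have h0 : c 2 * (-c 0 / c 2) = -c 0 := by field_simp
    have h1 : c 2 * (-c 1 / c 2) = -c 1 := by field_simp
    rw [hL, Fin.sum_univ_three, lineForm, mul_sub, mul_sub, ← mul_assoc, ← mul_assoc, ← C_mul,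
      ← C_mul, h0, h1, C_neg, C_neg]
    ring
  refine ⟨-c 0 / c 2, -c 1 / c 2, ?_, ?_⟩
  · intro f hf
    by_contra hfn
    have hz : L c ∈ ⋃ P ∈ associatedPrimes R3 (R3 ⧸ satIdeal I), (P : Set R3) := by
      rw [biUnion_associatedPrimes_eq_zero_divisors]
      refine ⟨Ideal.Quotient.mk _ f, fun h => hfn (Ideal.Quotient.eq_zero_iff_mem.1 h), ?_⟩
      change Ideal.Quotient.mk _ (L c * f) = 0
      rw [Ideal.Quotient.eq_zero_iff_mem, ← hline, mul_assoc]
      exact Ideal.mul_mem_left _ _ hf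
    obtain ⟨P, hP, hLP⟩ := Set.mem_iUnion₂.1 hz
    exact hc (Sum.inr (Sum.inl ⟨P, hP⟩)) hLP
  · intro v hv hv2
    by_contra! hcon
    have hq : Projectivization.mk ℂ v hv ∈ Z := ⟨v, hv, rfl, hcon⟩
    refine hc (Sum.inr (Sum.inr ⟨_, hq⟩)) ?_
    obtain ⟨s, hs⟩ := Projectivization.exists_smul_eq_mk_rep ℂ v hv
    change c ∈ LinearMap.ker (pairing (Projectivization.mk ℂ v hv).rep)
    rw [LinearMap.mem_ker, ← hs, pairing_apply, Fin.sum_univ_three]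
    simp only [Pi.smul_apply, Units.smul_def, smul_eq_mul, hv2]
    field_simp
    ring

/-- On a line missing the base locus there are two members of the linear system without common
zero, one of them not vanishing at the point at infinity. -/
lemma exists_coprime_pair {r n : ℕ} {p : Fin r → R3} (hhom : ∀ i, (p i).IsHomogeneous n)
    {a b : ℂ}
    (hline : ∀ v : Fin 3 → ℂ, v ≠ 0 → v 2 = a * v 0 + b * v 1 → ∃ i, eval v (p i) ≠ 0) :
    ∃ f ∈ Submodule.span ℂ (Set.range p), ∃ g ∈ Submodule.span ℂ (Set.range p),
      restr a b f ≠ 0 ∧ (restr a b f).natDegree = n ∧ IsCoprime (restr a b f) (restr a b g) := by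
  obtain ⟨i, hi⟩ := hline ![1, 0, a] (fun h => by simpa using congrFun h 0) (by simp)
  rw [← coeff_restr a b (hhom i)] at hi
  have hF0 : restr a b (p i) ≠ 0 := by intro h; simp [h] at hi
  let F := restr a b (p i)
  obtain ⟨c, hc⟩ := exists_avoiding
    (fun z : F.roots.toFinset => LinearMap.ker
      (pairing fun j => eval ![z.1, 1, a * z.1 + b] (p j))) (by
    intro z
    apply ker_pairing_ne_top
    obtain ⟨j, hj⟩ := hline ![z.1, 1, a * z.1 + b] (fun h => by simpa using congrFun h 1) (by simp)
    exact fun h => hj (congrFun h j))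
  refine ⟨p i, Submodule.subset_span ⟨i, rfl⟩, ∑ j, c j • p j,
    Submodule.sum_mem _ fun j _ => Submodule.smul_mem _ _ (Submodule.subset_span ⟨j, rfl⟩),
    hF0, le_antisymm (natDegree_restr_le a b (hhom i)) (Polynomial.le_natDegree_of_ne_zero hi), ?_⟩
  rw [Polynomial.isCoprime_iff_aeval_ne_zero_of_isAlgClosed ℂ ℂ]
  intro z
  by_contra! h
  simp only [Polynomial.coe_aeval_eq_eval] at h
  have hz : z ∈ F.roots.toFinset := by
    rw [Multiset.mem_toFinset, Polynomial.mem_roots hF0]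
    exact h.1
  refine hc ⟨z, hz⟩ ?_
  rw [LinearMap.mem_ker, pairing_apply]
  have h2 := h.2
  rw [eval_restr] at h2
  simpa using h2

/-! ### Conclusion -/

/-- Dividing out the equation of the line, a nonzero form vanishing on the line, in an ideal modulo
which that equation is a nonzerodivisor, produces one of smaller degree not vanishing on the
line. -/
lemma exists_restr_ne_zero {a b : ℂ} {J : Ideal R3} (hreg : ∀ f, lineForm a b * f ∈ J → f ∈ J)
    (k : ℕ) : ∀ q : R3, q ∈ J → q.IsHomogeneous k → q ≠ 0 → restr a b q = 0 →
      ∃ d < k, ∃ h ∈ J, h.IsHomogeneous d ∧ restr a b h ≠ 0 := by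
  induction k with
  | zero =>
    intro q _ hq hq0 h
    rw [← totalDegree_zero_iff_isHomogeneous, totalDegree_eq_zero_iff_eq_C] at hq
    rw [hq, restr_C, Polynomial.C_eq_zero] at h
    exact absurd (by rw [hq, h, C_0]) hq0
  | succ k ih =>
    intro q hqJ hq hq0 h
    obtain ⟨q', hq', rfl⟩ := exists_eq_lineForm_mul hq h
    by_cases h' : restr a b q' = 0
    · obtain ⟨d, hd, hex⟩ := ih q' (hreg _ hqJ) hq' (right_ne_zero_of_mul hq0) h'
      exact ⟨d, by omega, hex⟩
    · exact ⟨k, k.lt_succ_self, q', hreg _ hqJ, hq', h'⟩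

theorem stmt12 (n r : ℕ) (hr : 4 ≤ r) (p : Fin r → R3)
    (hhom : ∀ i, (p i).IsHomogeneous n)
    (hli : LinearIndependent ℂ p)
    -- the common zero locus in `ℂ³ ∖ {0}`, viewed in the projectivization of `ℂ³`, is finite
    (hfin : {q : Projectivization ℂ (Fin 3 → ℂ) |
        ∃ (v : Fin 3 → ℂ) (hv : v ≠ 0), q = Projectivization.mk ℂ v hv ∧
          ∀ i, MvPolynomial.eval v (p i) = 0}.Finite)
    -- the rational map to `ℙ^{r-1}` defined by the `p i` is generically finite:
    -- some nonempty fiber is finite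
    (hgf : ∃ v₀ : Fin 3 → ℂ, (fun i => MvPolynomial.eval v₀ (p i)) ≠ 0 ∧
      {q : Projectivization ℂ (Fin 3 → ℂ) |
        ∃ (v : Fin 3 → ℂ) (hv : v ≠ 0), q = Projectivization.mk ℂ v hv ∧
          ∃ lam : ℂ, lam ≠ 0 ∧
            (fun i => MvPolynomial.eval v (p i)) =
              lam • fun i => MvPolynomial.eval v₀ (p i)}.Finite)
    -- `D` is the eventual constant value of `dim (R/I)_k`
    (D N : ℕ)
    (hD : ∀ k, N ≤ k → quotDim (Ideal.span (Set.range p)) k = D) :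
    ∀ k : ℕ, 2 * n ≤ k + 3 →
      quotDim (satIdeal (Ideal.span (Set.range p))) k = D := by
  set I := Ideal.span (Set.range p) with hI
  obtain ⟨a, b, hreg, hline⟩ := exists_general_line hfin I
  obtain ⟨f, hf, g, hg, hF0, hF, hcop⟩ := exists_coprime_pair hhom hline
  have hspan_hom : ∀ q ∈ Submodule.span ℂ (Set.range p), q.IsHomogeneous n := fun q hq =>
    (Submodule.span_le.2 (by rintro _ ⟨i, rfl⟩; exact hhom i) :
      Submodule.span ℂ (Set.range p) ≤ homogeneousSubmodule (Fin 3) ℂ n) hq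
  have hspan_sat : ∀ q ∈ Submodule.span ℂ (Set.range p), q ∈ satIdeal I := fun q hq =>
    le_satIdeal I ((Submodule.span_le.2 (by
      rintro _ ⟨i, rfl⟩; exact Ideal.subset_span ⟨i, rfl⟩) :
      Submodule.span ℂ (Set.range p) ≤ I.restrictScalars ℂ) hq)
  -- a third element of the saturated ideal, nonzero modulo `f`, `g` and the line
  obtain ⟨d, hd, h, hh, hhd, hlt, heq⟩ : ∃ d ≤ n, ∃ h ∈ satIdeal I, h.IsHomogeneous d ∧
      (d < n → restr a b h ≠ 0) ∧ (d = n → ∀ κ μ : ℂ, restr a b h ≠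
        Polynomial.C κ * restr a b g + Polynomial.C μ * restr a b f) := by
    obtain ⟨i, hi⟩ : ∃ i, p i ∉ Submodule.span ℂ {f, g} := by
      by_contra! hcon
      have hle : Submodule.span ℂ (Set.range p) ≤ Submodule.span ℂ {f, g} :=
        Submodule.span_le.2 (by rintro _ ⟨i, rfl⟩; exact hcon i)
      have h1 := finrank_span_eq_card hli
      have : Module.Finite ℂ (Submodule.span ℂ {f, g}) :=
        Module.Finite.span_of_finite ℂ (Set.toFinite _)
      have h2 := Submodule.finrank_mono hle
      have h3 := finrank_span_finset_le_card (R := ℂ) ({f, g} : Finset R3)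
      have h4 := Finset.card_le_two (a := f) (b := g)
      rw [Finset.coe_pair, Set.finrank] at h3
      simp only [Fintype.card_fin] at h1
      omega
    by_cases hex : ∃ κ μ : ℂ, restr a b (p i) =
        Polynomial.C κ * restr a b g + Polynomial.C μ * restr a b f
    · obtain ⟨κ, μ, hκμ⟩ := hex
      have hqs : p i - (κ • g + μ • f) ∈ Submodule.span ℂ (Set.range p) :=
        Submodule.sub_mem _ (Submodule.subset_span ⟨i, rfl⟩)
          (Submodule.add_mem _ (Submodule.smul_mem _ _ hg) (Submodule.smul_mem _ _ hf))
      have hq0 : p i - (κ • g + μ • f) ≠ 0 := by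
        intro h0
        refine hi (Submodule.mem_span_pair.2 ⟨μ, κ, ?_⟩)
        rw [sub_eq_zero.1 h0, add_comm]
      have hqr : restr a b (p i - (κ • g + μ • f)) = 0 := by
        rw [map_sub, map_add, map_smul, map_smul, hκμ, Polynomial.smul_eq_C_mul,
          Polynomial.smul_eq_C_mul, sub_self]
      obtain ⟨d, hd, h, hhJ, hhd, hne⟩ :=
        exists_restr_ne_zero hreg n _ (hspan_sat _ hqs) (hspan_hom _ hqs) hq0 hqr
      exact ⟨d, hd.le, h, hhJ, hhd, fun _ => hne, fun h' => absurd h' hd.ne⟩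
    · push Not at hex
      exact ⟨n, le_rfl, p i, hspan_sat _ (Submodule.subset_span ⟨i, rfl⟩), hhom i,
        fun h' => absurd h' (lt_irrefl _), fun _ => hex⟩
  have step : ∀ k, 2 * n ≤ k + 3 →
      quotDim (satIdeal I) k = quotDim (satIdeal I) (k + 1) := by
    intro k hk
    refine quotDim_succ (lineForm_isHomogeneous a b) hreg fun w hw => ?_
    obtain ⟨A, B, E, hQ, hA, hB, hE⟩ := exists_cofactors hF hF0
      (natDegree_restr_le a b (hspan_hom g hg)) hcop (natDegree_restr_le a b hhd) hd hlt heq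
      (k := k + 1) (by omega) (natDegree_restr_le a b hw)
    obtain ⟨A', rfl, hA'⟩ := exists_lift a b hA
    obtain ⟨B', rfl, hB'⟩ := exists_lift a b hB
    obtain ⟨E', rfl, hE'⟩ := exists_lift a b hE
    obtain ⟨q, hq, he⟩ := exists_eq_lineForm_mul (a := a) (b := b)
      (hw.sub (((hA' f (hspan_hom f hf)).add (hB' g (hspan_hom g hg))).add (hE' h hhd)))
      (by simp only [map_sub, map_add, map_mul, hQ, sub_self])
    refine ⟨q, hq, ?_⟩
    rw [← he, sub_sub_cancel]
    exact Ideal.add_mem _ (Ideal.add_mem _ (Ideal.mul_mem_left _ _ (hspan_sat f hf))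
      (Ideal.mul_mem_left _ _ (hspan_sat g hg))) (Ideal.mul_mem_left _ _ hh)
  obtain ⟨M, hM⟩ := exists_satIdeal_le (J := I) (by
    intro q hq k
    let _ := MvPolynomial.gradedAlgebra (σ := Fin 3) (R := ℂ)
    refine homogeneousComponent_mem_of_mem (Ideal.homogeneous_span _ _ ?_) hq k
    rintro _ ⟨i, rfl⟩
    exact ⟨n, hhom i⟩)
  intro k hk
  have hconst : ∀ m, quotDim (satIdeal I) k = quotDim (satIdeal I) (k + m) := by
    intro m
    induction m with
    | zero => rfl
    | succ m ih => rw [ih, step (k + m) (by omega)]; rfl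
  rw [hconst (M + N), ← hD (k + (M + N)) (by omega)]
  exact quotDim_congr fun q hq => ⟨fun h => hM _ (by omega) q h hq, fun h => le_satIdeal I h⟩
end
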